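/- arXiv:2605.25238 — 6 statements merged into one kernel-verified Lean document; each statement's English description precedes it below -/
import Mathlib

section
/- Let p > 1 with Hölder conjugate q (1/p + 1/q = 1). There exist constants c, C > 0 depending only on p such that for every sequence V with V_n ≥ 0 for all n ≥ 1, every 𝔤 ∈ H^1 satisfying 𝔤_{n+1} ≥ 𝔤_n > 0 for all n ≥ 1, and every u ∈ H_0^1, one has c·∑_{n=1}^∞ V_{n+1}·R(q; 𝔤, u)_n ≤ ∑_{n=1}^∞ V_n·|∇u_n|^p + ∑_{n=1}^∞ (div(V·(∇𝔤)^{p−1})_n / 𝔤_n^{p−1})·|u_n|^p ≤ C·∑_{n=1}^∞ V_{n+1}·R(p; 𝔤, u)_n. -/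
open scoped BigOperators
open Finset Filter Asymptotics

noncomputable section

/-- Discrete gradient of a complex sequence: `(∇u)_n = u_n - u_{n-1}`. -/
def dgrad (u : ℤ → ℂ) : ℤ → ℂ := fun n => u n - u (n - 1)

/-- Discrete divergence of a complex sequence: `(div u)_n = u_{n+1} - u_n`. -/
def ddiv (u : ℤ → ℂ) : ℤ → ℂ := fun n => u (n + 1) - u n

/-- Discrete gradient of a real sequence. -/
def rgrad (g : ℤ → ℝ) : ℤ → ℝ := fun n => g n - g (n - 1)

/-- Discrete divergence of a real sequence. -/
def rdiv (g : ℤ → ℝ) : ℤ → ℝ := fun n => g (n + 1) - g n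

/-- `v^⟨a⟩ := v * |v|^(a-1)`, with `0^⟨a⟩ = 0`. -/
def sgnPow (a v : ℝ) : ℝ := v * |v| ^ (a - 1)

/-- The discrete `p`-Laplacian of order `m`:
`(-Δ_p^{(m)} g)_n = (-1)^m (div^m ((∇^m g)^⟨p-1⟩))_n`. -/
def pLap (p : ℝ) (m : ℕ) (g : ℤ → ℝ) : ℤ → ℝ :=
  fun n => (-1 : ℝ) ^ m * rdiv^[m] (fun k => sgnPow (p - 1) (rgrad^[m] g k)) n

/-- The remainder term `R(s; g, u)_n` (the exponent `p` is a separate parameter). -/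
def Rem (p s : ℝ) (g : ℤ → ℝ) (u : ℤ → ℂ) (n : ℤ) : ℝ :=
  if s ≤ 2 then
    ‖(Real.sqrt (g n / g (n + 1)) : ℂ) * u (n + 1)
        - (Real.sqrt (g (n + 1) / g n) : ℂ) * u n‖ ^ p
  else
    ‖(Real.sqrt (g n / g (n + 1)) : ℂ) * u (n + 1)
        - (Real.sqrt (g (n + 1) / g n) : ℂ) * u n‖ ^ (2 : ℝ)
      * (‖ddiv u n‖ + ‖u n‖ / g n * rdiv g n) ^ (p - 2)

/-- `∑_{n=a}^∞ f(n)` as a `tsum` over `ℕ`. -/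
def tsumFrom (a : ℤ) (f : ℤ → ℝ) : ℝ := ∑' n : ℕ, f (a + n)

/-!
For `1 ≤ n` with `g n < g (n + 1)` put `t = g n / g (n + 1)`, `x = u n / g n` and
`y = ∇u (n + 1) / ∇g (n + 1)`. Then `u (n + 1) / g (n + 1) = t x + (1 - t) y`, so up to a
telescoping term the `n`-th summand of the Hardy functional is `V (n + 1)` times a multiple of the
Jensen gap `t ‖x‖ ^ p + (1 - t) ‖y‖ ^ p - ‖t x + (1 - t) y‖ ^ p`. Expanding this gap at the mean
into Bregman divergences of `‖·‖ ^ p` shows that it is comparable to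
`t (1 - t) ‖y - x‖ ^ 2 (‖x‖ + ‖y‖) ^ (p - 2)`, and in terms of `u` and `g` the summand is comparable
to `V (n + 1) N ^ 2 M ^ (p - 2)`, where `N` and `M` are the two factors of the remainder for
`s > 2`. Since `N ≤ M`, replacing `N ^ 2 M ^ (p - 2)` by `N ^ p` keeps the lower bound if `p ≥ 2`
and the upper bound if `p ≤ 2`.
-/

/-- Two nonnegative real numbers `a` and `b` agree up to the factor `K ≥ 1`; this is the two-sided
estimate `a ≍ b` with its constant made explicit. -/
structure ComparableWith (K a b : ℝ) : Prop where
  one_le : 1 ≤ K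
  left_nonneg : 0 ≤ a
  right_nonneg : 0 ≤ b
  le : a ≤ K * b
  ge : b ≤ K * a

namespace ComparableWith

variable {K L a b c d e : ℝ}

lemma pos (h : ComparableWith K a b) : 0 < K := zero_lt_one.trans_le h.one_le

protected lemma refl (ha : 0 ≤ a) : ComparableWith 1 a a :=
  ⟨le_rfl, ha, ha, (one_mul a).ge, (one_mul a).ge⟩

protected lemma symm (h : ComparableWith K a b) : ComparableWith K b a :=
  ⟨h.one_le, h.right_nonneg, h.left_nonneg, h.ge, h.le⟩

lemma mono (h : ComparableWith K a b) (hKL : K ≤ L) : ComparableWith L a b :=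
  ⟨h.one_le.trans hKL, h.left_nonneg, h.right_nonneg,
    h.le.trans (mul_le_mul_of_nonneg_right hKL h.right_nonneg),
    h.ge.trans (mul_le_mul_of_nonneg_right hKL h.left_nonneg)⟩

protected lemma trans (h : ComparableWith K a b) (h' : ComparableWith L b c) :
    ComparableWith (K * L) a c where
  one_le := one_le_mul_of_one_le_of_one_le h.one_le h'.one_le
  left_nonneg := h.left_nonneg
  right_nonneg := h'.right_nonneg
  le := by
    rw [mul_assoc]
    exact h.le.trans (mul_le_mul_of_nonneg_left h'.le h.pos.le)
  ge := by
    rw [mul_comm K, mul_assoc]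
    exact h'.ge.trans (mul_le_mul_of_nonneg_left h.ge h'.pos.le)

lemma const_mul (hc : 0 < c) (ha : 0 ≤ a) : ComparableWith (max c c⁻¹) (c * a) a where
  one_le := (le_total 1 c).elim (fun h => le_max_of_le_left h)
    fun h => le_max_of_le_right ((one_le_inv₀ hc).2 h)
  left_nonneg := by positivity
  right_nonneg := ha
  le := mul_le_mul_of_nonneg_right (le_max_left _ _) ha
  ge := by
    calc a = c⁻¹ * (c * a) := (inv_mul_cancel_left₀ hc.ne' a).symm
      _ ≤ max c c⁻¹ * (c * a) := by gcongr; exact le_max_right _ _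

protected lemma mul (h : ComparableWith K a b) (h' : ComparableWith L c d) :
    ComparableWith (K * L) (a * c) (b * d) where
  one_le := one_le_mul_of_one_le_of_one_le h.one_le h'.one_le
  left_nonneg := mul_nonneg h.left_nonneg h'.left_nonneg
  right_nonneg := mul_nonneg h.right_nonneg h'.right_nonneg
  le := by
    rw [mul_mul_mul_comm]
    exact mul_le_mul h.le h'.le h'.left_nonneg (h.left_nonneg.trans h.le)
  ge := by
    rw [mul_mul_mul_comm]
    exact mul_le_mul h.ge h'.ge h'.right_nonneg (h.right_nonneg.trans h.ge)

protected lemma sq (h : ComparableWith K a b) : ComparableWith (K ^ 2) (a ^ 2) (b ^ 2) := by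
  simpa only [sq] using h.mul h

protected lemma add (h : ComparableWith K a b) (h' : ComparableWith L c d) :
    ComparableWith (max K L) (a + c) (b + d) := by
  have hac := h.mono (le_max_left K L)
  have hbd := h'.mono (le_max_right K L)
  refine ⟨hac.one_le, add_nonneg h.left_nonneg h'.left_nonneg,
    add_nonneg h.right_nonneg h'.right_nonneg, ?_, ?_⟩ <;> rw [mul_add]
  exacts [add_le_add hac.le hbd.le, add_le_add hac.ge hbd.ge]

lemma add_of_le (h : ComparableWith K a b) (hL : 0 ≤ L) (he : 0 ≤ e) (heb : e ≤ L * b) :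
    ComparableWith (K + L) (a + e) b where
  one_le := h.one_le.trans (le_add_of_nonneg_right hL)
  left_nonneg := add_nonneg h.left_nonneg he
  right_nonneg := h.right_nonneg
  le := (add_le_add h.le heb).trans_eq (add_mul K L b).symm
  ge := h.ge.trans (mul_le_mul (le_add_of_nonneg_right hL) (le_add_of_nonneg_right he)
    h.left_nonneg (add_nonneg h.pos.le hL))

lemma of_le_of_le (h : ComparableWith K a b) (h' : ComparableWith L c b) (hae : a ≤ e)
    (hec : e ≤ c) : ComparableWith (max K L) e b where
  one_le := h.one_le.trans (le_max_left K L)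
  left_nonneg := h.left_nonneg.trans hae
  right_nonneg := h.right_nonneg
  le := hec.trans (h'.mono (le_max_right K L)).le
  ge := (h.mono (le_max_left K L)).ge.trans
    (mul_le_mul_of_nonneg_left hae (h.mono (le_max_left K L)).pos.le)

lemma rpow_le (h : ComparableWith K a b) (θ : ℝ) : a ^ θ ≤ K ^ |θ| * b ^ θ := by
  rcases le_or_gt 0 θ with hθ | hθ
  · rw [abs_of_nonneg hθ, ← Real.mul_rpow h.pos.le h.right_nonneg]
    exact Real.rpow_le_rpow h.left_nonneg h.le hθ
  rcases h.right_nonneg.eq_or_lt with rfl | hb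
  · have ha : a = 0 := le_antisymm (by simpa using h.le) h.left_nonneg
    simp [ha, Real.zero_rpow hθ.ne]
  · have hba : K⁻¹ * b ≤ a := (inv_mul_le_iff₀ h.pos).2 h.ge
    calc a ^ θ ≤ (K⁻¹ * b) ^ θ :=
          Real.rpow_le_rpow_of_nonpos (mul_pos (inv_pos.2 h.pos) hb) hba hθ.le
      _ = K ^ |θ| * b ^ θ := by
          rw [Real.mul_rpow (inv_nonneg.2 h.pos.le) hb.le, Real.inv_rpow h.pos.le,
            ← Real.rpow_neg h.pos.le, abs_of_neg hθ]

protected lemma rpow (h : ComparableWith K a b) (θ : ℝ) :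
    ComparableWith (K ^ |θ|) (a ^ θ) (b ^ θ) :=
  ⟨Real.one_le_rpow h.one_le (abs_nonneg θ), Real.rpow_nonneg h.left_nonneg θ,
    Real.rpow_nonneg h.right_nonneg θ, h.rpow_le θ, h.symm.rpow_le θ⟩

end ComparableWith

section Scalar

lemma rpow_eq_rpow_sub_one_mul {p a : ℝ} (hp : p ≠ 0) (ha : 0 ≤ a) : a ^ p = a ^ (p - 1) * a := by
  rw [← Real.rpow_add_one' ha (by simpa using hp), sub_add_cancel]

lemma rpow_eq_sq_mul_rpow_sub_two {p a : ℝ} (hp : p ≠ 0) (ha : 0 ≤ a) :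
    a ^ p = a ^ 2 * a ^ (p - 2) := by
  rw [← Real.rpow_two, ← Real.rpow_add' ha (by simpa using hp), add_sub_cancel]

lemma comparableWith_one_sub_rpow {k x : ℝ} (hk : 0 < k) (hx : 0 ≤ x) (hx1 : x ≤ 1) :
    ComparableWith (max k k⁻¹) (1 - x ^ k) (1 - x) := by
  have hlin : ComparableWith (max k k⁻¹) (k * (1 - x)) (1 - x) :=
    .const_mul hk (sub_nonneg.2 hx1)
  have hrefl : ComparableWith (max k k⁻¹) (1 - x) (1 - x) :=
    (ComparableWith.refl (sub_nonneg.2 hx1)).mono hlin.one_le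
  rcases le_total 1 k with h1k | hk1
  · have bernoulli := one_add_mul_self_le_rpow_one_add (s := x - 1) (by linarith) h1k
    have hpow : x ^ k ≤ x := Real.rpow_le_self_of_le_one hx hx1 h1k
    rw [add_sub_cancel] at bernoulli
    simpa only [max_self] using hrefl.of_le_of_le hlin (e := 1 - x ^ k) (by linarith) (by linarith)
  · have bernoulli := rpow_one_add_le_one_add_mul_self (s := x - 1) (by linarith) hk.le hk1
    have hpow : x ≤ x ^ k := Real.self_le_rpow_of_le_one hx hx1 hk1
    rw [add_sub_cancel] at bernoulli
    simpa only [max_self] using hlin.of_le_of_le hrefl (e := 1 - x ^ k) (by linarith) (by linarith)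

lemma exists_comparableWith_rpow_sub_mul_sub {k : ℝ} (hk : 0 < k) :
    ∃ K, ∀ a b : ℝ, 0 ≤ a → 0 ≤ b →
      ComparableWith K ((a ^ k - b ^ k) * (a - b)) ((a - b) ^ 2 * (a + b) ^ (k - 1)) := by
  suffices ∃ K, ∀ a b : ℝ, 0 < a → 0 ≤ b → b ≤ a →
      ComparableWith K ((a ^ k - b ^ k) * (a - b)) ((a - b) ^ 2 * (a + b) ^ (k - 1)) by
    obtain ⟨K, hK⟩ := this
    refine ⟨max K 1, fun a b ha hb => ?_⟩
    rcases lt_trichotomy a b with hab | rfl | hab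
    · convert (hK b a (ha.trans_lt hab) ha hab.le).mono (le_max_left K 1) using 1 <;> ring_nf
    · simpa using (ComparableWith.refl le_rfl).mono (le_max_right K 1)
    · exact (hK a b (hb.trans_lt hab) hb hab.le).mono (le_max_left K 1)
  refine ⟨max k k⁻¹ * 2 ^ |k - 1| * 1, fun a b ha hb hba => ?_⟩
  have hsum : ComparableWith 2 a (a + b) :=
    ⟨one_le_two, ha.le, by linarith, by linarith, by linarith⟩
  have hdiff := comparableWith_one_sub_rpow hk (div_nonneg hb ha.le) ((div_le_one ha).2 hba)
  have hak : a ^ k = a ^ (k - 1) * a := rpow_eq_rpow_sub_one_mul hk.ne' ha.le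
  have hfactor : (1 - (b / a) ^ k) * a ^ (k - 1) = (a ^ k - b ^ k) / a := by
    rw [Real.div_rpow hb ha.le, hak]
    have := (Real.rpow_pos_of_pos ha (k - 1)).ne'
    field_simp
  convert (hdiff.mul (hsum.rpow (k - 1))).mul
    (ComparableWith.refl (mul_nonneg ha.le (sub_nonneg.2 hba))) using 1
  · rw [hfactor]
    field_simp
  · field_simp

/-- The Bregman divergence of `x ↦ x ^ p` on `[0, ∞)`, that is the error at `s` of the first-order
Taylor expansion at `r`. -/
def rpowBregman (p r s : ℝ) : ℝ := s ^ p - r ^ p - p * r ^ (p - 1) * (s - r)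

lemma rpowBregman_nonneg {p r s : ℝ} (hp : 1 < p) (hr : 0 ≤ r) (hs : 0 ≤ s) :
    0 ≤ rpowBregman p r s := by
  rcases hr.eq_or_lt with rfl | hr
  · simpa [rpowBregman, Real.zero_rpow, (zero_lt_one.trans hp).ne', (sub_pos.2 hp).ne']
      using Real.rpow_nonneg hs p
  · have bernoulli := one_add_mul_self_le_rpow_one_add (s := s / r - 1)
      (by linarith [div_nonneg hs hr.le]) hp.le
    have hrp : r ^ p = r ^ (p - 1) * r := rpow_eq_rpow_sub_one_mul (by linarith) hr.le
    rw [add_sub_cancel, Real.div_rpow hs hr.le, le_div_iff₀ (by positivity), hrp] at bernoulli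
    have : (1 + p * (s / r - 1)) * (r ^ (p - 1) * r)
        = r ^ (p - 1) * r + p * r ^ (p - 1) * (s - r) := by field_simp
    rw [rpowBregman, hrp]
    linarith

lemma rpowBregman_le {p r s : ℝ} (hp : 1 < p) (hr : 0 ≤ r) (hs : 0 ≤ s) :
    rpowBregman p r s ≤ p * ((s ^ (p - 1) - r ^ (p - 1)) * (s - r)) := by
  have h := rpowBregman_nonneg hp hs hr
  unfold rpowBregman at h ⊢
  linarith

lemma le_rpowBregman {p r s : ℝ} (hp : 1 < p) (hr : 0 ≤ r) (hs : 0 ≤ s) :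
    p * ((((r + s) / 2) ^ (p - 1) - r ^ (p - 1)) * ((r + s) / 2 - r)) ≤ rpowBregman p r s := by
  have hm : 0 ≤ (r + s) / 2 := by positivity
  have hrm := rpowBregman_nonneg hp hr hm
  have hms := rpowBregman_nonneg hp hm hs
  unfold rpowBregman at hrm hms ⊢
  linarith

lemma exists_comparableWith_rpowBregman {p : ℝ} (hp : 1 < p) :
    ∃ K, ∀ r s : ℝ, 0 ≤ r → 0 ≤ s →
      ComparableWith K (rpowBregman p r s) ((s - r) ^ 2 * (r + s) ^ (p - 2)) := by
  have hp0 : 0 < p := by linarith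
  obtain ⟨K, hK⟩ := exists_comparableWith_rpow_sub_mul_sub (sub_pos.2 hp)
  rw [show p - 1 - 1 = p - 2 by ring] at hK
  constructor
  · intro r s hr hs
    have hm : 0 ≤ (r + s) / 2 := by positivity
    have hmid := hK _ _ hm hr
    have hmid_scale : ComparableWith (max (1 / 4) (1 / 4)⁻¹ * 2 ^ |p - 2|)
          (((r + s) / 2 - r) ^ 2 * ((r + s) / 2 + r) ^ (p - 2))
          ((s - r) ^ 2 * (r + s) ^ (p - 2)) := by
      have hdiff : ((r + s) / 2 - r) ^ 2 = 1 / 4 * (s - r) ^ 2 := by ring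
      have hsum : ComparableWith 2 ((r + s) / 2 + r) (r + s) :=
        ⟨one_le_two, by positivity, by positivity, by linarith, by linarith⟩
      rw [hdiff]
      exact (ComparableWith.const_mul (by norm_num) (sq_nonneg _)).mul (hsum.rpow _)
    have hend := add_comm s r ▸ hK s r hs hr
    exact .of_le_of_le
      ((ComparableWith.const_mul hp0 hmid.left_nonneg).trans (hmid.trans hmid_scale))
      ((ComparableWith.const_mul hp0 hend.left_nonneg).trans hend)
      (le_rpowBregman hp hr hs) (rpowBregman_le hp hr hs)

lemma mul_rpow_le_two_rpow_mul_rpow {θ τ σ β : ℝ} (hθ : -1 ≤ θ) (hτ : 0 ≤ τ) (hτ1 : τ ≤ 1)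
    (hσ : 0 ≤ σ) (hβ : τ * σ ≤ β) (hβ2 : β ≤ 2 * σ) : τ * β ^ θ ≤ 2 ^ |θ| * σ ^ θ := by
  have hβ0 : 0 ≤ β := (mul_nonneg hτ hσ).trans hβ
  rcases le_or_gt 0 θ with hθ0 | hθ0
  · calc τ * β ^ θ ≤ 1 * (2 * σ) ^ θ := by gcongr
      _ = 2 ^ |θ| * σ ^ θ := by rw [one_mul, Real.mul_rpow zero_le_two hσ, abs_of_nonneg hθ0]
  rcases hτ.eq_or_lt with rfl | hτ
  · rw [zero_mul]
    positivity
  rcases hσ.eq_or_lt with rfl | hσ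
  · obtain rfl : β = 0 := by linarith
    simp [Real.zero_rpow hθ0.ne]
  calc τ * β ^ θ ≤ τ * (τ * σ) ^ θ := by
        gcongr ?_ * ?_
        exact Real.rpow_le_rpow_of_nonpos (mul_pos hτ hσ) hβ hθ0.le
    _ = τ ^ (1 + θ) * σ ^ θ := by
        rw [Real.mul_rpow hτ.le hσ.le, Real.rpow_add hτ, Real.rpow_one, mul_assoc]
    _ ≤ 1 * σ ^ θ := by
        gcongr
        exact Real.rpow_le_one hτ.le hτ1 (by linarith)
    _ ≤ 2 ^ |θ| * σ ^ θ := by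
        gcongr
        exact Real.one_le_rpow one_le_two (abs_nonneg θ)

/-- Whichever of `t` and `1 - t` is at least `1 / 2` carries the lower bound. -/
lemma exists_comparableWith_convexComb_rpow {θ : ℝ} (hθ : -1 ≤ θ) :
    ∃ K, ∀ t σ α β : ℝ, 0 ≤ t → t ≤ 1 → 0 ≤ σ → t * σ ≤ α → α ≤ 2 * σ →
      (1 - t) * σ ≤ β → β ≤ 2 * σ →
      ComparableWith K (t * α ^ θ + (1 - t) * β ^ θ) (σ ^ θ) := by
  suffices ∃ K, ∀ t σ α β : ℝ, 1 / 2 ≤ t → t ≤ 1 → 0 ≤ σ → t * σ ≤ α → α ≤ 2 * σ →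
      (1 - t) * σ ≤ β → β ≤ 2 * σ →
      ComparableWith K (t * α ^ θ + (1 - t) * β ^ θ) (σ ^ θ) by
    obtain ⟨K, hK⟩ := this
    refine ⟨K, fun t σ α β ht ht1 hσ hα hα2 hβ hβ2 => ?_⟩
    rcases le_total (1 / 2) t with h | h
    · exact hK t σ α β h ht1 hσ hα hα2 hβ hβ2
    · simpa [add_comm] using hK (1 - t) σ β α (by linarith) (by linarith) hσ hβ hβ2 (by simpa) hα2
  constructor
  · intro t σ α β ht ht1 hσ hα hα2 hβ hβ2
    have hασ : ComparableWith 2 α σ :=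
      ⟨one_le_two, by nlinarith, hσ, hα2, by nlinarith⟩
    have htone : ComparableWith 2 t 1 := ⟨one_le_two, by linarith, zero_le_one, by linarith,
      by linarith⟩
    have hmain := htone.mul (hασ.rpow θ)
    rw [one_mul] at hmain
    have hβ0 : 0 ≤ β := (mul_nonneg (sub_nonneg.2 ht1) hσ).trans hβ
    exact hmain.add_of_le (by positivity)
      (mul_nonneg (sub_nonneg.2 ht1) (Real.rpow_nonneg hβ0 θ))
      (mul_rpow_le_two_rpow_mul_rpow hθ (sub_nonneg.2 ht1) (by linarith) hσ hβ hβ2)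

end Scalar

lemma sq_norm_sub_norm_le {E : Type*} [SeminormedAddCommGroup E] (x y : E) :
    (‖y‖ - ‖x‖) ^ 2 ≤ ‖y - x‖ ^ 2 :=
  sq_le_sq.2 (by simpa using abs_norm_sub_norm_le y x)

lemma sq_norm_sub_sub_sq_le {E : Type*} [SeminormedAddCommGroup E] (x y : E) :
    ‖y - x‖ ^ 2 - (‖y‖ - ‖x‖) ^ 2 ≤ 4 * (‖x‖ * ‖y‖) := by
  have := pow_le_pow_left₀ (norm_nonneg _) (norm_sub_le y x) 2
  linarith

section Bregman

variable {E : Type*} [NormedAddCommGroup E] [InnerProductSpace ℝ E]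

/-- The Bregman divergence of `x ↦ ‖x‖ ^ p`, whose gradient at `x` is `p * ‖x‖ ^ (p - 2) • x`. -/
def normRpowBregman (p : ℝ) (x y : E) : ℝ :=
  ‖y‖ ^ p - ‖x‖ ^ p - p * ‖x‖ ^ (p - 2) * inner ℝ x (y - x)

lemma normRpowBregman_eq {p : ℝ} (hp : 1 < p) (x y : E) :
    normRpowBregman p x y = rpowBregman p ‖x‖ ‖y‖
      + p / 2 * (‖x‖ ^ (p - 2) * (‖y - x‖ ^ 2 - (‖y‖ - ‖x‖) ^ 2)) := by
  have hpow : ‖x‖ ^ (p - 1) = ‖x‖ ^ (p - 2) * ‖x‖ := by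
    rw [rpow_eq_rpow_sub_one_mul (sub_pos.2 hp).ne' (norm_nonneg x), show p - 1 - 1 = p - 2 by ring]
  rw [normRpowBregman, rpowBregman, hpow, norm_sub_sq_real, inner_sub_right,
    real_inner_self_eq_norm_sq, real_inner_comm]
  ring

/-- Here `‖x‖` and `‖x‖ + ‖y‖` are comparable, so the radial and tangential parts of `y - x` enter
with the same weight. -/
lemma exists_comparableWith_normRpowBregman_of_norm_le {p : ℝ} (hp : 1 < p) :
    ∃ K, ∀ x y : E, ‖y‖ ≤ 3 * ‖x‖ →
      ComparableWith K (normRpowBregman p x y) (‖y - x‖ ^ 2 * (‖x‖ + ‖y‖) ^ (p - 2)) := by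
  have hp2 : 0 < p / 2 := by linarith
  obtain ⟨K, hK⟩ := exists_comparableWith_rpowBregman hp
  constructor
  · intro x y hyx
    have hweight : ComparableWith 4 ‖x‖ (‖x‖ + ‖y‖) :=
      ⟨by norm_num, by positivity, by positivity, by linarith [norm_nonneg x, norm_nonneg y],
        by linarith⟩
    have htang : ComparableWith 1 (‖y - x‖ ^ 2 - (‖y‖ - ‖x‖) ^ 2) _ :=
      .refl (sub_nonneg.2 (sq_norm_sub_norm_le x y))
    have hprod := (hweight.rpow (p - 2)).mul htang
    convert (hK _ _ (norm_nonneg x) (norm_nonneg y)).add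
      ((ComparableWith.const_mul hp2 hprod.left_nonneg).trans hprod) using 1
    · exact normRpowBregman_eq hp x y
    · ring

/-- Here the radial part of `y - x` alone is comparable to `‖y - x‖`, and the tangential part is an
error term. -/
lemma exists_comparableWith_normRpowBregman_of_le_norm {p : ℝ} (hp : 1 < p) :
    ∃ K, ∀ x y : E, 3 * ‖x‖ ≤ ‖y‖ →
      ComparableWith K (normRpowBregman p x y) (‖y - x‖ ^ 2 * (‖x‖ + ‖y‖) ^ (p - 2)) := by
  obtain ⟨K, hK⟩ := exists_comparableWith_rpowBregman hp
  constructor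
  · intro x y hxy
    have hx := norm_nonneg x
    have hy := norm_nonneg y
    have hp2 : 0 ≤ p / 2 := by linarith
    have hradial : ComparableWith 2 (‖y‖ - ‖x‖) ‖y - x‖ :=
      ⟨one_le_two, by linarith, norm_nonneg _,
        by linarith [norm_sub_norm_le y x, norm_nonneg (y - x)],
        by linarith [norm_sub_le y x]⟩
    have hsum : ‖x‖ + ‖y‖ ≤ 2 * ‖y - x‖ := by linarith [norm_sub_norm_le y x]
    have htang : ‖x‖ ^ (p - 2) * (‖y - x‖ ^ 2 - (‖y‖ - ‖x‖) ^ 2)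
        ≤ 16 * (‖y - x‖ ^ 2 * (‖x‖ + ‖y‖) ^ (p - 2)) := by
      calc ‖x‖ ^ (p - 2) * (‖y - x‖ ^ 2 - (‖y‖ - ‖x‖) ^ 2)
          ≤ ‖x‖ ^ (p - 2) * (4 * (‖x‖ * ‖y‖)) := by gcongr; exact sq_norm_sub_sub_sq_le x y
        _ = 4 * (‖x‖ ^ (p - 1) * ‖y‖) := by
            rw [rpow_eq_rpow_sub_one_mul (sub_pos.2 hp).ne' hx, show p - 1 - 1 = p - 2 by ring]
            ring
        _ ≤ 4 * ((‖x‖ + ‖y‖) ^ (p - 1) * (‖x‖ + ‖y‖)) := by gcongr <;> linarith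
        _ = 4 * ((‖x‖ + ‖y‖) ^ 2 * (‖x‖ + ‖y‖) ^ (p - 2)) := by
            rw [← rpow_eq_rpow_sub_one_mul (by linarith) (add_nonneg hx hy),
              rpow_eq_sq_mul_rpow_sub_two (by linarith) (add_nonneg hx hy)]
        _ ≤ 4 * ((2 * ‖y - x‖) ^ 2 * (‖x‖ + ‖y‖) ^ (p - 2)) := by gcongr
        _ = 16 * (‖y - x‖ ^ 2 * (‖x‖ + ‖y‖) ^ (p - 2)) := by ring
    rw [normRpowBregman_eq hp]
    refine ((hK _ _ hx hy).trans (hradial.sq.mul (.refl (by positivity)))).add_of_le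
      (L := p / 2 * 16) (mul_nonneg hp2 (by norm_num)) (mul_nonneg hp2 (mul_nonneg (by positivity)
        (sub_nonneg.2 (sq_norm_sub_norm_le x y)))) ?_
    rw [mul_assoc (p / 2)]
    exact mul_le_mul_of_nonneg_left htang hp2

theorem exists_comparableWith_normRpowBregman {p : ℝ} (hp : 1 < p) :
    ∃ K, ∀ x y : E,
      ComparableWith K (normRpowBregman p x y) (‖y - x‖ ^ 2 * (‖x‖ + ‖y‖) ^ (p - 2)) := by
  obtain ⟨K, hK⟩ := exists_comparableWith_normRpowBregman_of_norm_le (E := E) hp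
  obtain ⟨L, hL⟩ := exists_comparableWith_normRpowBregman_of_le_norm (E := E) hp
  exact ⟨max K L, fun x y => (le_total ‖y‖ (3 * ‖x‖)).elim
    (fun h => (hK x y h).mono (le_max_left K L)) fun h => (hL x y h).mono (le_max_right K L)⟩

end Bregman

section NormedSpace

variable {E : Type*} [NormedAddCommGroup E] [NormedSpace ℝ E]

lemma mul_norm_add_norm_le_norm_convexComb_add {t : ℝ} (ht : 0 ≤ t) (ht1 : t ≤ 1) (x y : E) :
    t * (‖x‖ + ‖y‖) ≤ ‖t • x + (1 - t) • y‖ + ‖y‖ := by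
  have h := norm_le_add_norm_add (t • x) ((1 - t) • y)
  rw [norm_smul, norm_smul, Real.norm_of_nonneg ht, Real.norm_of_nonneg (sub_nonneg.2 ht1)] at h
  linarith

lemma norm_convexComb_le_norm_add_norm {t : ℝ} (ht : 0 ≤ t) (ht1 : t ≤ 1) (x y : E) :
    ‖t • x + (1 - t) • y‖ ≤ ‖x‖ + ‖y‖ := by
  refine (norm_add_le _ _).trans (add_le_add ?_ ?_) <;> rw [norm_smul]
  · exact mul_le_of_le_one_left (norm_nonneg x) (by rwa [Real.norm_of_nonneg ht])
  · exact mul_le_of_le_one_left (norm_nonneg y)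
      (by rw [Real.norm_of_nonneg (sub_nonneg.2 ht1)]; linarith)

/-- The gap in Jensen's inequality for `x ↦ ‖x‖ ^ p` and the weights `t`, `1 - t`. -/
def jensenGap (p t : ℝ) (x y : E) : ℝ :=
  t * ‖x‖ ^ p + (1 - t) * ‖y‖ ^ p - ‖t • x + (1 - t) • y‖ ^ p

/-- The summand of the Hardy functional divided by `V (n + 1)`, up to a term which telescopes, at
one pair of neighbouring sites: `a = g n`, `b = g (n + 1)`, `z = u n`, `w = u (n + 1)`. -/
def hardyGap (p a b : ℝ) (z w : E) : ℝ :=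
  ‖w - z‖ ^ p + (b - a) ^ (p - 1) * (‖z‖ ^ p / a ^ (p - 1) - ‖w‖ ^ p / b ^ (p - 1))

/-- The first factor of the remainder: for `0 < a` and `0 < b` it measures how far `(z, w)` is from
being a multiple of the ground state `(a, b)`. -/
def hardyDefect (a b : ℝ) (z w : E) : ℝ := ‖√(a / b) • w - √(b / a) • z‖

/-- The second factor `|div u| + (|u| / g) div g` of the remainder, with `b - a` for `div g`. -/
def hardyScale (a b : ℝ) (z w : E) : ℝ := ‖w - z‖ + ‖z‖ / a * (b - a)

/-- The remainder at one pair of neighbouring sites; for `E = ℂ`, the term `Rem p s g u n` unfolds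
to `hardyRem p s (g n) (g (n + 1)) (u n) (u (n + 1))`. -/
def hardyRem (p s a b : ℝ) (z w : E) : ℝ :=
  if s ≤ 2 then hardyDefect a b z w ^ p
  else hardyDefect a b z w ^ (2 : ℝ) * hardyScale a b z w ^ (p - 2)

lemma hardyDefect_nonneg (a b : ℝ) (z w : E) : 0 ≤ hardyDefect a b z w := norm_nonneg _

lemma hardyDefect_eq {a : ℝ} (ha : a ≠ 0) (b : ℝ) (z w : E) :
    hardyDefect a b z w = √(a / b) * ‖w - z - ((b - a) / a) • z‖ := by
  have hsqrt : √(b / a) = √(a / b) * (b / a) := by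
    rw [← inv_div b a, Real.sqrt_inv, inv_mul_eq_div, Real.div_sqrt]
  rw [hardyDefect, hsqrt, ← Real.norm_of_nonneg (Real.sqrt_nonneg (a / b)), ← norm_smul,
    Real.norm_of_nonneg (Real.sqrt_nonneg _), sub_div, div_self ha]
  congr 1
  module

lemma hardyDefect_le_hardyScale {a b : ℝ} (ha : 0 < a) (hab : a ≤ b) (z w : E) :
    hardyDefect a b z w ≤ hardyScale a b z w := by
  have hsqrt : √(a / b) ≤ 1 := Real.sqrt_le_one.2 (div_le_one_of_le₀ hab (ha.le.trans hab))
  calc hardyDefect a b z w = √(a / b) * ‖w - z - ((b - a) / a) • z‖ := hardyDefect_eq ha.ne' b z w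
    _ ≤ ‖w - z - ((b - a) / a) • z‖ := mul_le_of_le_one_left (norm_nonneg _) hsqrt
    _ ≤ ‖w - z‖ + ‖((b - a) / a) • z‖ := norm_sub_le _ _
    _ = hardyScale a b z w := by
      rw [norm_smul, Real.norm_of_nonneg (div_nonneg (sub_nonneg.2 hab) ha.le), hardyScale]
      ring

lemma hardyRem_le {p s a b : ℝ} (hps : s ≤ 2 → 2 ≤ p) (ha : 0 < a) (hab : a ≤ b) (z w : E) :
    hardyRem p s a b z w ≤ hardyDefect a b z w ^ 2 * hardyScale a b z w ^ (p - 2) := by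
  have hN := hardyDefect_nonneg a b z w
  unfold hardyRem
  split_ifs with hs
  · have hp : 2 ≤ p := hps hs
    rw [rpow_eq_sq_mul_rpow_sub_two (by linarith) hN]
    gcongr
    exact hardyDefect_le_hardyScale ha hab z w
  · rw [Real.rpow_two]

lemma le_hardyRem {p s a b : ℝ} (hp : p ≠ 0) (hps : s ≤ 2 → p ≤ 2) (ha : 0 < a) (hab : a ≤ b)
    (z w : E) :
    hardyDefect a b z w ^ 2 * hardyScale a b z w ^ (p - 2) ≤ hardyRem p s a b z w := by
  unfold hardyRem
  split_ifs with hs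
  · rw [rpow_eq_sq_mul_rpow_sub_two hp (hardyDefect_nonneg a b z w)]
    rcases (hardyDefect_nonneg a b z w).eq_or_lt with hN | hN
    · simp [← hN]
    · gcongr ?_ * ?_
      exact Real.rpow_le_rpow_of_nonpos hN (hardyDefect_le_hardyScale ha hab z w)
        (sub_nonpos.2 (hps hs))
  · rw [Real.rpow_two]

lemma hardyDefect_smul_add_smul {a d : ℝ} (ha : a ≠ 0) (hd : 0 ≤ d) (x y : E) :
    hardyDefect a (a + d) (a • x) (a • x + d • y) = √(a / (a + d)) * (d * ‖y - x‖) := by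
  rw [hardyDefect_eq ha, add_sub_cancel_left, add_sub_cancel_left, smul_smul, div_mul_cancel₀ _ ha,
    ← smul_sub, norm_smul, Real.norm_of_nonneg hd]

lemma hardyScale_smul_add_smul {a d : ℝ} (ha : 0 < a) (hd : 0 ≤ d) (x y : E) :
    hardyScale a (a + d) (a • x) (a • x + d • y) = d * (‖x‖ + ‖y‖) := by
  rw [hardyScale, add_sub_cancel_left, add_sub_cancel_left, norm_smul, norm_smul,
    Real.norm_of_nonneg hd, Real.norm_of_nonneg ha.le, mul_div_cancel_left₀ _ ha.ne']
  ring

lemma hardyDefect_sq_mul_hardyScale_rpow {p a d : ℝ} (hp : p ≠ 1) (ha : 0 < a) (hd : 0 < d)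
    (x y : E) :
    hardyDefect a (a + d) (a • x) (a • x + d • y) ^ 2
        * hardyScale a (a + d) (a • x) (a • x + d • y) ^ (p - 2)
      = d ^ (p - 1) * (a + d) * (a / (a + d) * (1 - a / (a + d))
        * (‖y - x‖ ^ 2 * (‖x‖ + ‖y‖) ^ (p - 2))) := by
  rw [hardyDefect_smul_add_smul ha.ne' hd.le, hardyScale_smul_add_smul ha hd.le, mul_pow,
    Real.sq_sqrt (by positivity), Real.mul_rpow hd.le (by positivity),
    rpow_eq_rpow_sub_one_mul (sub_ne_zero.2 hp) hd.le, show p - 1 - 1 = p - 2 by ring]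
  field_simp
  ring

lemma hardyGap_smul_add_smul {p a d : ℝ} (hp : p ≠ 0) (ha : 0 < a) (hd : 0 < d) (x y : E) :
    hardyGap p a (a + d) (a • x) (a • x + d • y)
      = d ^ (p - 1) * (a + d) * jensenGap p (a / (a + d)) x y := by
  have hb : 0 < a + d := add_pos ha hd
  have hmean : (a / (a + d)) • x + (1 - a / (a + d)) • y = (a + d)⁻¹ • (a • x + d • y) := by
    rw [one_sub_div hb.ne', add_sub_cancel_left, smul_add, smul_smul, smul_smul, div_eq_inv_mul,
      div_eq_inv_mul]
  have hsplit (c : ℝ) (hc : 0 ≤ c) : c ^ p = c ^ (p - 1) * c := rpow_eq_rpow_sub_one_mul hp hc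
  rw [hardyGap, jensenGap, hmean, add_sub_cancel_left, add_sub_cancel_left, norm_smul a,
    norm_smul d, norm_smul (a + d)⁻¹, Real.norm_of_nonneg ha.le, Real.norm_of_nonneg hd.le,
    Real.norm_of_nonneg (inv_nonneg.2 hb.le), Real.mul_rpow ha.le (norm_nonneg x),
    Real.mul_rpow hd.le (norm_nonneg y), Real.mul_rpow (inv_nonneg.2 hb.le) (norm_nonneg _),
    Real.inv_rpow hb.le, hsplit a ha.le, hsplit d hd.le, hsplit (a + d) hb.le]
  field_simp
  ring

end NormedSpace

section InnerProductSpace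

variable {E : Type*} [NormedAddCommGroup E] [InnerProductSpace ℝ E]

lemma jensenGap_eq_normRpowBregman_add (p t : ℝ) (x y : E) :
    jensenGap p t x y = t * normRpowBregman p (t • x + (1 - t) • y) x
      + (1 - t) * normRpowBregman p (t • x + (1 - t) • y) y := by
  have first_order : t * inner ℝ (t • x + (1 - t) • y) (x - (t • x + (1 - t) • y))
      + (1 - t) * inner ℝ (t • x + (1 - t) • y) (y - (t • x + (1 - t) • y)) = 0 := by
    rw [← real_inner_smul_right, ← real_inner_smul_right, ← inner_add_right]
    convert inner_zero_right _ using 2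
    module
  unfold normRpowBregman jensenGap
  linear_combination (p * ‖t • x + (1 - t) • y‖ ^ (p - 2)) * first_order

theorem exists_comparableWith_jensenGap {p : ℝ} (hp : 1 < p) :
    ∃ K, ∀ (t : ℝ) (x y : E), 0 ≤ t → t ≤ 1 →
      ComparableWith K (jensenGap p t x y)
        (t * (1 - t) * (‖y - x‖ ^ 2 * (‖x‖ + ‖y‖) ^ (p - 2))) := by
  obtain ⟨K, hK⟩ := exists_comparableWith_normRpowBregman (E := E) hp
  obtain ⟨L, hL⟩ := exists_comparableWith_convexComb_rpow (θ := p - 2) (by linarith)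
  constructor
  · intro t x y ht ht1
    have ht1' : 0 ≤ 1 - t := sub_nonneg.2 ht1
    have hx := mul_norm_add_norm_le_norm_convexComb_add ht ht1 x y
    have hy := mul_norm_add_norm_le_norm_convexComb_add ht1' (sub_le_self 1 ht) y x
    have hm := norm_convexComb_le_norm_add_norm ht ht1 x y
    rw [sub_sub_cancel, add_comm ((1 - t) • y)] at hy
    rw [jensenGap_eq_normRpowBregman_add]
    set m := t • x + (1 - t) • y with hm_def
    have hmx : ‖x - m‖ = (1 - t) * ‖y - x‖ := by
      rw [show x - m = (1 - t) • (x - y) by rw [hm_def]; module, norm_smul,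
        Real.norm_of_nonneg ht1', norm_sub_rev]
    have hmy : ‖y - m‖ = t * ‖y - x‖ := by
      rw [show y - m = t • (y - x) by rw [hm_def]; module, norm_smul, Real.norm_of_nonneg ht]
    have hweights := hL t (‖x‖ + ‖y‖) (‖m‖ + ‖y‖) (‖m‖ + ‖x‖) ht ht1 (by positivity) hx
      (by linarith [norm_nonneg x]) (by linarith) (by linarith [norm_nonneg y])
    have hbregman := ((ComparableWith.refl ht).mul (hK m x)).add
      ((ComparableWith.refl ht1').mul (hK m y))
    have hfactor : t * (‖x - m‖ ^ 2 * (‖m‖ + ‖x‖) ^ (p - 2))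
          + (1 - t) * (‖y - m‖ ^ 2 * (‖m‖ + ‖y‖) ^ (p - 2))
        = t * (1 - t) * ‖y - x‖ ^ 2
          * (t * (‖m‖ + ‖y‖) ^ (p - 2) + (1 - t) * (‖m‖ + ‖x‖) ^ (p - 2)) := by
      rw [hmx, hmy]
      ring
    rw [hfactor] at hbregman
    rw [← mul_assoc (t * (1 - t))]
    exact hbregman.trans ((ComparableWith.refl (by positivity)).mul hweights)

theorem exists_comparableWith_hardyGap {p : ℝ} (hp : 1 < p) :
    ∃ K, ∀ (a b : ℝ) (z w : E), 0 < a → a ≤ b →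
      ComparableWith K (hardyGap p a b z w)
        (hardyDefect a b z w ^ 2 * hardyScale a b z w ^ (p - 2)) := by
  obtain ⟨K, hK⟩ := exists_comparableWith_jensenGap (E := E) hp
  refine ⟨max K 1, fun a b z w ha hab => ?_⟩
  rcases hab.eq_or_lt with rfl | hab
  · have hgap : hardyGap p a a z w = ‖w - z‖ ^ p := by
      simp [hardyGap, Real.zero_rpow (sub_pos.2 hp).ne']
    have hproduct : hardyDefect a a z w ^ 2 * hardyScale a a z w ^ (p - 2) = ‖w - z‖ ^ p := by
      rw [rpow_eq_sq_mul_rpow_sub_two (by linarith) (norm_nonneg _)]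
      simp [hardyDefect, hardyScale, div_self ha.ne']
    rw [hgap, hproduct]
    exact (ComparableWith.refl (by positivity)).mono (le_max_right K 1)
  · obtain ⟨d, hd, rfl⟩ : ∃ d, 0 < d ∧ b = a + d := ⟨b - a, sub_pos.2 hab, by ring⟩
    obtain ⟨x, rfl⟩ : ∃ x, z = a • x := ⟨a⁻¹ • z, (smul_inv_smul₀ ha.ne' z).symm⟩
    obtain ⟨y, rfl⟩ : ∃ y, w = a • x + d • y :=
      ⟨d⁻¹ • (w - a • x), by rw [smul_inv_smul₀ hd.ne', add_sub_cancel]⟩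
    have hjensen := hK (a / (a + d)) x y (by positivity) (div_le_one_of_le₀ hab.le (by positivity))
    rw [hardyGap_smul_add_smul (by linarith) ha hd,
      hardyDefect_sq_mul_hardyScale_rpow hp.ne' ha hd]
    exact ((ComparableWith.refl (by positivity)).mul hjensen).mono (by simp)

lemma exists_hardyRem_le_hardyGap_le {p : ℝ} (hp : 1 < p) :
    ∃ K, 0 < K ∧ ∀ (s a b : ℝ) (z w : E), 0 < a → a ≤ b →
      ((s ≤ 2 → 2 ≤ p) → K⁻¹ * hardyRem p s a b z w ≤ hardyGap p a b z w) ∧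
      ((s ≤ 2 → p ≤ 2) → hardyGap p a b z w ≤ K * hardyRem p s a b z w) := by
  obtain ⟨K, hK⟩ := exists_comparableWith_hardyGap (E := E) hp
  have hK0 : 0 < K := (hK 1 1 0 0 one_pos le_rfl).pos
  refine ⟨K, hK0, fun s a b z w ha hab => ⟨fun hs => ?_, fun hs => ?_⟩⟩
  · exact (inv_mul_le_iff₀ hK0).2 ((hardyRem_le hs ha hab z w).trans (hK a b z w ha hab).ge)
  · exact (hK a b z w ha hab).le.trans
      (mul_le_mul_of_nonneg_left (le_hardyRem (by linarith) hs ha hab z w) hK0.le)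

end InnerProductSpace

section Summation

variable {f f' : ℤ → ℝ} {a : ℤ}

lemma eventually_cofinite_add_right {P : ℤ → Prop} (h : ∀ᶠ n in cofinite, P n) (k : ℤ) :
    ∀ᶠ n in cofinite, P (n + k) :=
  (add_left_injective k).tendsto_cofinite.eventually h

lemma summable_add_natCast (hf : ∀ᶠ n in cofinite, f n = 0) (a : ℤ) :
    Summable fun k : ℕ => f (a + k) :=
  summable_of_hasFiniteSupport <| eventually_cofinite.1 <|
    ((add_right_injective a).comp Nat.cast_injective).tendsto_cofinite.eventually hf

lemma tsumFrom_mul_left (c : ℝ) (f : ℤ → ℝ) (a : ℤ) :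
    tsumFrom a (fun n => c * f n) = c * tsumFrom a f :=
  tsum_mul_left

lemma tsumFrom_add (hf : ∀ᶠ n in cofinite, f n = 0) (hf' : ∀ᶠ n in cofinite, f' n = 0) :
    tsumFrom a (fun n => f n + f' n) = tsumFrom a f + tsumFrom a f' :=
  (summable_add_natCast hf a).tsum_add (summable_add_natCast hf' a)

lemma tsumFrom_le_tsumFrom (hf : ∀ᶠ n in cofinite, f n = 0) (hf' : ∀ᶠ n in cofinite, f' n = 0)
    (hle : ∀ n, a ≤ n → f n ≤ f' n) : tsumFrom a f ≤ tsumFrom a f' :=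
  (summable_add_natCast hf a).tsum_le_tsum (fun k => hle _ (by simp)) (summable_add_natCast hf' a)

lemma tsumFrom_sub_succ (hf : ∀ᶠ n in cofinite, f n = 0) :
    tsumFrom a (fun n => f n - f (n + 1)) = f a := by
  have hsum := summable_add_natCast hf a
  have hcast (k : ℕ) : f (a + k + 1) = f (a + (k + 1 : ℕ)) := by
    rw [Nat.cast_add_one, add_assoc]
  simp only [tsumFrom, hcast]
  rw [hsum.tsum_sub ((summable_nat_add_iff 1).2 hsum), hsum.tsum_eq_zero_add, add_sub_cancel_right,
    Nat.cast_zero, add_zero]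

end Summation

section Hardy

variable {E : Type*} [NormedAddCommGroup E]

/-- The `p`-Hardy functional `∑ V |∇u| ^ p + ∑ (div (V (∇g) ^ (p - 1)) / g ^ (p - 1)) |u| ^ p`. -/
def hardyFunctional (p : ℝ) (V g : ℤ → ℝ) (u : ℤ → E) : ℝ :=
  tsumFrom 1 (fun n => V n * ‖u n - u (n - 1)‖ ^ p)
    + tsumFrom 1 (fun n =>
        (V (n + 1) * rgrad g (n + 1) ^ (p - 1) - V n * rgrad g n ^ (p - 1)) / g n ^ (p - 1)
          * ‖u n‖ ^ p)

lemma eventually_cofinite_hardyGap_eq_zero {p : ℝ} {u : ℤ → E} (hp : p ≠ 0)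
    (hu : ∀ᶠ n in cofinite, u n = 0) (g : ℤ → ℝ) :
    ∀ᶠ n in cofinite, hardyGap p (g n) (g (n + 1)) (u n) (u (n + 1)) = 0 := by
  filter_upwards [hu, eventually_cofinite_add_right hu 1] with n hn hn_succ
  simp [hardyGap, hn, hn_succ, Real.zero_rpow hp]

lemma eventually_cofinite_hardyRem_eq_zero [NormedSpace ℝ E] {p : ℝ} {u : ℤ → E} (hp : p ≠ 0)
    (hu : ∀ᶠ n in cofinite, u n = 0) (s : ℝ) (g : ℤ → ℝ) :
    ∀ᶠ n in cofinite, hardyRem p s (g n) (g (n + 1)) (u n) (u (n + 1)) = 0 := by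
  filter_upwards [hu, eventually_cofinite_add_right hu 1] with n hn hn_succ
  simp [hardyRem, hardyDefect, hn, hn_succ, Real.zero_rpow hp]

/-- The sequence whose increments are the difference between the summands of `hardyFunctional` and
the weighted gaps `V (n + 1) * hardyGap p (g n) (g (n + 1)) (u n) (u (n + 1))`. -/
def hardyFlux (p : ℝ) (V g : ℤ → ℝ) (u : ℤ → E) (n : ℤ) : ℝ :=
  V n * (‖u n - u (n - 1)‖ ^ p - rgrad g n ^ (p - 1) / g n ^ (p - 1) * ‖u n‖ ^ p)

lemma hardyFlux_one {p : ℝ} {g : ℤ → ℝ} {u : ℤ → E} (V : ℤ → ℝ) (hg0 : g 0 = 0) (hg1 : 0 < g 1)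
    (hu0 : u 0 = 0) : hardyFlux p V g u 1 = 0 := by
  simp [hardyFlux, rgrad, hg0, hu0, div_self (Real.rpow_pos_of_pos hg1 (p - 1)).ne']

lemma eventually_cofinite_hardyFlux_eq_zero {p : ℝ} {u : ℤ → E} (hp : p ≠ 0)
    (hu : ∀ᶠ n in cofinite, u n = 0) (V g : ℤ → ℝ) :
    ∀ᶠ n in cofinite, hardyFlux p V g u n = 0 := by
  filter_upwards [hu, eventually_cofinite_add_right hu (-1)] with n hn hn_pred
  simp [hardyFlux, hn, sub_eq_add_neg, hn_pred, Real.zero_rpow hp]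

lemma hardyFunctional_summand_eq (p : ℝ) (V g : ℤ → ℝ) (u : ℤ → E) (n : ℤ) :
    V n * ‖u n - u (n - 1)‖ ^ p
        + (V (n + 1) * rgrad g (n + 1) ^ (p - 1) - V n * rgrad g n ^ (p - 1)) / g n ^ (p - 1)
          * ‖u n‖ ^ p
      = V (n + 1) * hardyGap p (g n) (g (n + 1)) (u n) (u (n + 1))
        + (hardyFlux p V g u n - hardyFlux p V g u (n + 1)) := by
  simp only [hardyFlux, hardyGap, rgrad, add_sub_cancel_right]
  ring

theorem hardyFunctional_eq_tsumFrom_hardyGap {p : ℝ} {g : ℤ → ℝ} {u : ℤ → E} (hp : p ≠ 0)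
    (V : ℤ → ℝ) (hg0 : g 0 = 0) (hg1 : 0 < g 1) (hu0 : u 0 = 0)
    (hu : ∀ᶠ n in cofinite, u n = 0) :
    hardyFunctional p V g u
      = tsumFrom 1 (fun n => V (n + 1) * hardyGap p (g n) (g (n + 1)) (u n) (u (n + 1))) := by
  have henergy : ∀ᶠ n in cofinite, V n * ‖u n - u (n - 1)‖ ^ p = 0 := by
    filter_upwards [hu, eventually_cofinite_add_right hu (-1)] with n hn hn_pred
    simp [hn, sub_eq_add_neg, hn_pred, Real.zero_rpow hp]
  have hpotential : ∀ᶠ n in cofinite,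
      (V (n + 1) * rgrad g (n + 1) ^ (p - 1) - V n * rgrad g n ^ (p - 1)) / g n ^ (p - 1)
        * ‖u n‖ ^ p = 0 :=
    hu.mono fun n hn => by simp [hn, Real.zero_rpow hp]
  have hgap : ∀ᶠ n in cofinite, V (n + 1) * hardyGap p (g n) (g (n + 1)) (u n) (u (n + 1)) = 0 :=
    (eventually_cofinite_hardyGap_eq_zero hp hu g).mono fun _ hn => mul_eq_zero_of_right _ hn
  have hflux := eventually_cofinite_hardyFlux_eq_zero hp hu V g
  have hincrement : ∀ᶠ n in cofinite, hardyFlux p V g u n - hardyFlux p V g u (n + 1) = 0 := by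
    filter_upwards [hflux, eventually_cofinite_add_right hflux 1] with n hn hn_succ
    rw [hn, hn_succ, sub_zero]
  rw [hardyFunctional, ← tsumFrom_add henergy hpotential]
  simp only [hardyFunctional_summand_eq]
  rw [tsumFrom_add hgap hincrement, tsumFrom_sub_succ hflux, hardyFlux_one V hg0 hg1 hu0, add_zero]

end Hardy

theorem stmt_0_general {E : Type*} [NormedAddCommGroup E] [InnerProductSpace ℝ E] {p : ℝ}
    (hp : 1 < p) :
    ∃ c C : ℝ, 0 < c ∧ 0 < C ∧
      ∀ (s : ℝ) (V g : ℤ → ℝ) (u : ℤ → E), (∀ n, 1 ≤ n → 0 ≤ V n) → g 0 = 0 →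
        (∀ n, 1 ≤ n → 0 < g n ∧ g n ≤ g (n + 1)) → u 0 = 0 → (Function.support u).Finite →
        ((s ≤ 2 → 2 ≤ p) →
          c * tsumFrom 1 (fun n => V (n + 1) * hardyRem p s (g n) (g (n + 1)) (u n) (u (n + 1)))
            ≤ hardyFunctional p V g u) ∧
        ((s ≤ 2 → p ≤ 2) →
          hardyFunctional p V g u
            ≤ C * tsumFrom 1
              (fun n => V (n + 1) * hardyRem p s (g n) (g (n + 1)) (u n) (u (n + 1)))) := by
  have hp0 : p ≠ 0 := by linarith
  obtain ⟨K, hK, hpointwise⟩ := exists_hardyRem_le_hardyGap_le (E := E) hp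
  refine ⟨K⁻¹, K, inv_pos.2 hK, hK, fun s V g u hV hg0 hg hu0 hu => ?_⟩
  have hgap : ∀ᶠ n in cofinite, V (n + 1) * hardyGap p (g n) (g (n + 1)) (u n) (u (n + 1)) = 0 :=
    (eventually_cofinite_hardyGap_eq_zero hp0 hu g).mono fun _ hn => mul_eq_zero_of_right _ hn
  have hrem (c : ℝ) : ∀ᶠ n in cofinite,
      c * (V (n + 1) * hardyRem p s (g n) (g (n + 1)) (u n) (u (n + 1))) = 0 :=
    (eventually_cofinite_hardyRem_eq_zero hp0 hu s g).mono fun _ hn =>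
      mul_eq_zero_of_right _ (mul_eq_zero_of_right _ hn)
  rw [hardyFunctional_eq_tsumFrom_hardyGap hp0 V hg0 (hg 1 le_rfl).1 hu0 hu, ← tsumFrom_mul_left,
    ← tsumFrom_mul_left]
  refine ⟨fun hs => tsumFrom_le_tsumFrom (hrem _) hgap fun n hn => ?_,
    fun hs => tsumFrom_le_tsumFrom hgap (hrem _) fun n hn => ?_⟩
  all_goals
    have hpointwise := hpointwise s (g n) (g (n + 1)) (u n) (u (n + 1)) (hg n hn).1 (hg n hn).2
    rw [mul_left_comm]
  · exact mul_le_mul_of_nonneg_left (hpointwise.1 hs) (hV _ (by omega))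
  · exact mul_le_mul_of_nonneg_left (hpointwise.2 hs) (hV _ (by omega))

lemma two_le_of_one_div_add_one_div_eq_one {p q : ℝ} (hp : 1 < p) (hpq : 1 / p + 1 / q = 1)
    (hq : q ≤ 2) : 2 ≤ p := by
  have h : p.HolderConjugate q :=
    Real.holderConjugate_iff.2 ⟨hp, by simpa only [one_div] using hpq⟩
  nlinarith [h.sub_one_mul_conj, h.symm.lt]

/-- Theorem 2.1, weighted abstract first-order `p`-Hardy inequality.
There are constants `c, C > 0`, depending only on `p`, such that for every nonnegative
weight `V`, every `𝔤 ∈ H^1` with `𝔤_{n+1} ≥ 𝔤_n > 0` for `n ≥ 1`, and every `u ∈ H_0^1`,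
`c ∑_{n≥1} V_{n+1} R(q;𝔤,u)_n ≤ ∑_{n≥1} V_n |∇u_n|^p + ∑_{n≥1} (div(V (∇𝔤)^{p-1})_n / 𝔤_n^{p-1}) |u_n|^p
  ≤ C ∑_{n≥1} V_{n+1} R(p;𝔤,u)_n`. -/
theorem stmt_0 (p q : ℝ) (hp : 1 < p) (hpq : 1 / p + 1 / q = 1) :
    ∃ c C : ℝ, 0 < c ∧ 0 < C ∧
      ∀ (V g : ℤ → ℝ) (u : ℤ → ℂ),
        (∀ n : ℤ, 1 ≤ n → 0 ≤ V n) →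
        (∀ n : ℤ, n < 1 → g n = 0) →
        (∀ n : ℤ, 1 ≤ n → 0 < g n ∧ g n ≤ g (n + 1)) →
        (∀ n : ℤ, n < 1 → u n = 0) →
        (Function.support u).Finite →
          c * tsumFrom 1 (fun n => V (n + 1) * Rem p q g u n)
              ≤ tsumFrom 1 (fun n => V n * ‖dgrad u n‖ ^ p)
                + tsumFrom 1 (fun n =>
                    (V (n + 1) * rgrad g (n + 1) ^ (p - 1)
                        - V n * rgrad g n ^ (p - 1)) / g n ^ (p - 1) * ‖u n‖ ^ p)
            ∧ tsumFrom 1 (fun n => V n * ‖dgrad u n‖ ^ p)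
                + tsumFrom 1 (fun n =>
                    (V (n + 1) * rgrad g (n + 1) ^ (p - 1)
                        - V n * rgrad g n ^ (p - 1)) / g n ^ (p - 1) * ‖u n‖ ^ p)
              ≤ C * tsumFrom 1 (fun n => V (n + 1) * Rem p p g u n) := by
  obtain ⟨c, C, hc, hC, h⟩ := stmt_0_general (E := ℂ) hp
  refine ⟨c, C, hc, hC, fun V g u hV hg0 hg hu0 hu => ⟨?_, ?_⟩⟩
  · exact (h q V g u hV (hg0 0 one_pos) hg (hu0 0 one_pos) hu).1
      (two_le_of_one_div_add_one_div_eq_one hp hpq)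
  · exact (h p V g u hV (hg0 0 one_pos) hg (hu0 0 one_pos) hu).2 id
end
end

section
/- Let p ∈ (1,2]. There exist constants c, C > 0 depending only on p such that for all t ∈ [0,1] and all z ∈ ℂ one has c·t·|z−1|^2·(|z−t| + 1 − t)^{p−2} ≤ |z−t|^p − (1−t)^{p−1}·(|z|^p − t) ≤ C·t^{p/2}·|z−1|^p, where the left-hand side is understood as 0 in the degenerate case z = t = 1. -/
noncomputable section

/-!
Put `w = z - t e` and, for `t < 1`, `y = w / (1 - t)`, so that `z = t e + (1 - t) y`. Then
`‖w‖ ^ p - (1 - t) ^ (p - 1) * (‖z‖ ^ p - t ‖e‖ ^ p)` is `(1 - t) ^ (p - 1)` times the Jensen gap of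
`‖·‖ ^ p` at the convex combination `z` of `e` and `y`. The lower bound is strong convexity of
`‖·‖ ^ p` on the ball of radius `‖e‖ + ‖y‖`. The upper bound is the first-order expansion
`‖x + h‖ ^ p ≤ ‖x‖ ^ p + p * ‖x‖ ^ (p - 2) * ⟪x, h⟫ + 2 * ‖h‖ ^ p` at `x = z`, whose linear terms
cancel in the Jensen gap.
-/

open Set Metric
open scoped InnerProductSpace

section Real

variable {p q u v : ℝ}

lemma sq_rpow_half (hu : 0 ≤ u) (q : ℝ) : (u ^ 2) ^ (q / 2) = u ^ q := by
  rw [← Real.rpow_natCast_mul hu]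
  congr 1
  push_cast
  ring

lemma sq_mul_rpow_sub_two (hu : 0 ≤ u) (hp : p ≠ 0) : u ^ 2 * u ^ (p - 2) = u ^ p := by
  rw [← Real.rpow_natCast, ← Real.rpow_add' hu (by simpa using hp)]
  simp

lemma rpow_sub_one_mul_self (hu : 0 < u) (p : ℝ) : u ^ (p - 1) * u = u ^ p := by
  rw [← Real.rpow_add_one hu.ne', sub_add_cancel]

lemma rpow_le_rpow_add_mul_sub (hq₀ : 0 ≤ q) (hq₁ : q ≤ 1) (hu : 0 < u) (hv : 0 ≤ v) :
    v ^ q ≤ u ^ q + q * u ^ (q - 1) * (v - u) := by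
  have bernoulli : (v / u) ^ q ≤ 1 + q * (v / u - 1) := by
    simpa using rpow_one_add_le_one_add_mul_self (s := v / u - 1)
      (by linarith [div_nonneg hv hu.le]) hq₀ hq₁
  calc v ^ q = (v / u) ^ q * u ^ q := by
        rw [← Real.mul_rpow (by positivity) hu.le, div_mul_cancel₀ v hu.ne']
    _ ≤ (1 + q * (v / u - 1)) * u ^ q := by gcongr
    _ = u ^ q + q * u ^ (q - 1) * (v - u) := by rw [Real.rpow_sub_one hu.ne']; field_simp

lemma rpow_add_mul_sub_le_rpow (hp : 1 ≤ p) (hu : 0 < u) (hv : 0 ≤ v) :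
    u ^ p + p * u ^ (p - 1) * (v - u) ≤ v ^ p := by
  have bernoulli : 1 + p * (v / u - 1) ≤ (v / u) ^ p := by
    simpa using one_add_mul_self_le_rpow_one_add (s := v / u - 1)
      (by linarith [div_nonneg hv hu.le]) hp
  calc u ^ p + p * u ^ (p - 1) * (v - u) = (1 + p * (v / u - 1)) * u ^ p := by
        rw [Real.rpow_sub_one hu.ne']; field_simp
    _ ≤ (v / u) ^ p * u ^ p := by gcongr
    _ = v ^ p := by rw [← Real.mul_rpow (by positivity) hu.le, div_mul_cancel₀ v hu.ne']

lemma mul_rpow_sub_one_mul_le_rpow_add_rpow (hp : 1 ≤ p) (hu : 0 < u) (hv : 0 ≤ v) :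
    p * u ^ (p - 1) * v ≤ (p - 1) * u ^ p + v ^ p := by
  linear_combination rpow_add_mul_sub_le_rpow hp hu hv + p * rpow_sub_one_mul_self hu p

lemma monotoneOn_rpow_sub_mul (hq₀ : 0 ≤ q) (hq₁ : q ≤ 1) (R : ℝ) :
    MonotoneOn (fun r : ℝ ↦ r ^ q - q * R ^ (q - 1) * r) (Icc 0 R) := by
  intro u hu v hv huv
  rcases hv.1.eq_or_lt with rfl | hv₀
  · rw [le_antisymm huv hu.1]
  have tangent := rpow_le_rpow_add_mul_sub hq₀ hq₁ hv₀ hu.1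
  have hR : R ^ (q - 1) ≤ v ^ (q - 1) :=
    Real.rpow_le_rpow_of_nonpos hv₀ hv.2 (by linarith)
  have hslope := mul_le_mul_of_nonneg_left hR (mul_nonneg hq₀ (sub_nonneg.2 huv))
  beta_reduce
  linear_combination tangent + hslope

lemma hasDerivAt_rpow_sub_mul_sq (hp : 1 ≤ p) (R r : ℝ) :
    HasDerivAt (fun r : ℝ ↦ r ^ p - p * (p - 1) * R ^ (p - 2) / 2 * r ^ 2)
      (p * (r ^ (p - 1) - (p - 1) * R ^ (p - 2) * r)) r := by
  refine ((Real.hasDerivAt_rpow_const (Or.inr hp)).fun_sub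
    ((hasDerivAt_pow 2 r).const_mul (p * (p - 1) * R ^ (p - 2) / 2))).congr_deriv ?_
  push_cast
  ring

lemma monotoneOn_deriv_rpow_sub_mul_sq (hp₁ : 1 ≤ p) (hp₂ : p ≤ 2) (R : ℝ) :
    MonotoneOn (fun r : ℝ ↦ p * (r ^ (p - 1) - (p - 1) * R ^ (p - 2) * r)) (Icc 0 R) := by
  have hmono := monotoneOn_rpow_sub_mul (q := p - 1) (by linarith) (by linarith) R
  rw [show p - 1 - 1 = p - 2 by ring] at hmono
  exact fun u hu v hv huv ↦ mul_le_mul_of_nonneg_left (hmono hu hv huv) (by linarith)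

lemma convexOn_rpow_sub_mul_sq (hp₁ : 1 ≤ p) (hp₂ : p ≤ 2) (R : ℝ) :
    ConvexOn ℝ (Icc 0 R) (fun r : ℝ ↦ r ^ p - p * (p - 1) * R ^ (p - 2) / 2 * r ^ 2) := by
  have hderiv := hasDerivAt_rpow_sub_mul_sq hp₁ R
  refine MonotoneOn.convexOn_of_deriv (convex_Icc 0 R)
    (fun r _ ↦ (hderiv r).continuousAt.continuousWithinAt)
    (fun r _ ↦ (hderiv r).differentiableAt.differentiableWithinAt) ?_
  rw [funext fun r ↦ (hderiv r).deriv]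
  exact (monotoneOn_deriv_rpow_sub_mul_sq hp₁ hp₂ R).mono interior_subset

lemma monotoneOn_rpow_sub_mul_sq (hp₁ : 1 ≤ p) (hp₂ : p ≤ 2) (R : ℝ) :
    MonotoneOn (fun r : ℝ ↦ r ^ p - p * (p - 1) * R ^ (p - 2) / 2 * r ^ 2) (Icc 0 R) := by
  have hderiv := hasDerivAt_rpow_sub_mul_sq hp₁ R
  refine monotoneOn_of_hasDerivWithinAt_nonneg (convex_Icc 0 R)
    (fun r _ ↦ (hderiv r).continuousAt.continuousWithinAt)
    (fun r _ ↦ (hderiv r).hasDerivWithinAt) fun r hr ↦ ?_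
  have hr := interior_subset hr
  have hmono := monotoneOn_deriv_rpow_sub_mul_sq hp₁ hp₂ R
    (left_mem_Icc.2 (hr.1.trans hr.2)) hr hr.1
  have hzero : 0 ≤ p * (0 : ℝ) ^ (p - 1) := by positivity
  linear_combination hmono + hzero

end Real

section InnerProductSpace

variable {E : Type*} [NormedAddCommGroup E] [InnerProductSpace ℝ E] {p s t : ℝ}

lemma strongConvexOn_norm_rpow (hp₁ : 1 ≤ p) (hp₂ : p ≤ 2) (R : ℝ) :
    StrongConvexOn (closedBall (0 : E) R) (p * (p - 1) * R ^ (p - 2)) (fun x ↦ ‖x‖ ^ p) := by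
  rw [strongConvexOn_iff_convex]
  have hball := convex_closedBall (0 : E) R
  have himage : norm '' closedBall (0 : E) R ⊆ Icc 0 R := by
    rintro _ ⟨x, hx, rfl⟩
    exact ⟨norm_nonneg x, mem_closedBall_zero_iff.1 hx⟩
  have hconvex : Convex ℝ (norm '' closedBall (0 : E) R) :=
    (hball.isPreconnected.image norm continuous_norm.continuousOn).convex
  exact ((convexOn_rpow_sub_mul_sq hp₁ hp₂ R).subset himage hconvex).comp (convexOn_norm hball)
    ((monotoneOn_rpow_sub_mul_sq hp₁ hp₂ R).mono himage)

lemma le_jensen_gap_norm_rpow (hp₁ : 1 ≤ p) (hp₂ : p ≤ 2) (ht : 0 ≤ t) (hs : 0 ≤ s)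
    (hts : t + s = 1) (x y : E) :
    p * (p - 1) / 2 * (t * s * ‖x - y‖ ^ 2 * (‖x‖ + ‖y‖) ^ (p - 2)) ≤
      t * ‖x‖ ^ p + s * ‖y‖ ^ p - ‖t • x + s • y‖ ^ p := by
  have hx : x ∈ closedBall 0 (‖x‖ + ‖y‖) := by simp
  have hy : y ∈ closedBall 0 (‖x‖ + ‖y‖) := by simp
  have hconvex := (strongConvexOn_norm_rpow hp₁ hp₂ _).2 hx hy ht hs hts
  simp only [smul_eq_mul] at hconvex
  linear_combination hconvex

-- `u ↦ u ^ (p / 2)` is subadditive and lies below its tangents; apply this to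
-- `‖x + h‖ ^ 2 = (‖x‖ ^ 2 + 2 * ⟪x, h⟫) + ‖h‖ ^ 2`.
lemma norm_add_rpow_le_of_nonneg (hp₀ : 0 ≤ p) (hp₂ : p ≤ 2) {x h : E} (hx : x ≠ 0)
    (hxh : 0 ≤ ‖x‖ ^ 2 + 2 * ⟪x, h⟫_ℝ) :
    ‖x + h‖ ^ p ≤ ‖x‖ ^ p + p * ‖x‖ ^ (p - 2) * ⟪x, h⟫_ℝ + ‖h‖ ^ p := by
  have tangent := rpow_le_rpow_add_mul_sub (q := p / 2) (by linarith) (by linarith)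
    (pow_pos (norm_pos_iff.2 hx) 2) hxh
  rw [show p / 2 - 1 = (p - 2) / 2 by ring, sq_rpow_half (norm_nonneg x),
    sq_rpow_half (norm_nonneg x)] at tangent
  calc ‖x + h‖ ^ p = (‖x‖ ^ 2 + 2 * ⟪x, h⟫_ℝ + ‖h‖ ^ 2) ^ (p / 2) := by
        rw [← norm_add_sq_real, sq_rpow_half (norm_nonneg _)]
    _ ≤ (‖x‖ ^ 2 + 2 * ⟪x, h⟫_ℝ) ^ (p / 2) + (‖h‖ ^ 2) ^ (p / 2) :=
        Real.rpow_add_le_add_rpow hxh (by positivity) (by linarith) (by linarith)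
    _ ≤ ‖x‖ ^ p + p * ‖x‖ ^ (p - 2) * ⟪x, h⟫_ℝ + ‖h‖ ^ p := by
        rw [sq_rpow_half (norm_nonneg h)]
        linear_combination tangent

lemma neg_mul_inner_le_norm_rpow_add (hp₁ : 1 ≤ p) {x : E} (hx : x ≠ 0) (h : E) :
    -(p * ‖x‖ ^ (p - 2) * ⟪x, h⟫_ℝ) ≤ (p - 1) * ‖x‖ ^ p + ‖h‖ ^ p := by
  have hx₀ : 0 < ‖x‖ := norm_pos_iff.2 hx
  calc -(p * ‖x‖ ^ (p - 2) * ⟪x, h⟫_ℝ) = p * ‖x‖ ^ (p - 2) * -⟪x, h⟫_ℝ := by ring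
    _ ≤ p * ‖x‖ ^ (p - 2) * (‖x‖ * ‖h‖) := by
        gcongr
        exact (neg_le_abs _).trans (abs_real_inner_le_norm x h)
    _ = p * ‖x‖ ^ (p - 1) * ‖h‖ := by
        rw [show p - 1 = p - 2 + 1 by ring, Real.rpow_add_one hx₀.ne']
        ring
    _ ≤ (p - 1) * ‖x‖ ^ p + ‖h‖ ^ p :=
        mul_rpow_sub_one_mul_le_rpow_add_rpow hp₁ hx₀ (norm_nonneg h)

lemma norm_add_rpow_le (hp₁ : 1 ≤ p) (hp₂ : p ≤ 2) (x h : E) :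
    ‖x + h‖ ^ p ≤ ‖x‖ ^ p + p * ‖x‖ ^ (p - 2) * ⟪x, h⟫_ℝ + 2 * ‖h‖ ^ p := by
  have hh : 0 ≤ ‖h‖ ^ p := by positivity
  rcases eq_or_ne x 0 with rfl | hx
  · simp only [zero_add, norm_zero, inner_zero_left, mul_zero, add_zero,
      Real.zero_rpow (by linarith : p ≠ 0)]
    linarith
  rcases le_or_gt 0 (‖x‖ ^ 2 + 2 * ⟪x, h⟫_ℝ) with hxh | hxh
  · linarith [norm_add_rpow_le_of_nonneg (by linarith) hp₂ hx hxh]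
  · have hnorm : ‖x + h‖ ≤ ‖h‖ := by
      refine le_of_sq_le_sq ?_ (norm_nonneg h)
      linarith [norm_add_sq_real x h]
    have hle : ‖x + h‖ ^ p ≤ ‖h‖ ^ p :=
      Real.rpow_le_rpow (norm_nonneg _) hnorm (by linarith)
    have hxp : 0 ≤ (2 - p) * ‖x‖ ^ p := mul_nonneg (by linarith) (by positivity)
    linear_combination hle + neg_mul_inner_le_norm_rpow_add hp₁ hx h + hxp

lemma jensen_gap_norm_rpow_le (hp₁ : 1 ≤ p) (hp₂ : p ≤ 2) (ht : 0 ≤ t) (hs : 0 ≤ s)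
    (hts : t + s = 1) (x y : E) :
    t * ‖x‖ ^ p + s * ‖y‖ ^ p - ‖t • x + s • y‖ ^ p ≤
      2 * (t * s ^ p + s * t ^ p) * ‖x - y‖ ^ p := by
  obtain rfl : s = 1 - t := by linarith
  set m := t • x + (1 - t) • y with hm
  have hx := norm_add_rpow_le hp₁ hp₂ m ((1 - t) • (x - y))
  have hy := norm_add_rpow_le hp₁ hp₂ m (-(t • (x - y)))
  rw [show m + (1 - t) • (x - y) = x by rw [hm]; module, real_inner_smul_right, norm_smul,
    Real.norm_of_nonneg hs, Real.mul_rpow hs (norm_nonneg _)] at hx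
  rw [show m + -(t • (x - y)) = y by rw [hm]; module, inner_neg_right, real_inner_smul_right,
    norm_neg, norm_smul, Real.norm_of_nonneg ht, Real.mul_rpow ht (norm_nonneg _)] at hy
  linear_combination t * hx + (1 - t) * hy

lemma jensen_gap_norm_rpow_le_mul (hp₁ : 1 ≤ p) (hp₂ : p ≤ 2) (ht : 0 ≤ t) (hs : 0 ≤ s)
    (hts : t + s = 1) (x y : E) :
    t * ‖x‖ ^ p + s * ‖y‖ ^ p - ‖t • x + s • y‖ ^ p ≤ 4 * (t * s * ‖x - y‖ ^ p) := by
  have htp : t ^ p ≤ t := Real.rpow_le_self_of_le_one ht (by linarith) hp₁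
  have hsp : s ^ p ≤ s := Real.rpow_le_self_of_le_one hs (by linarith) hp₁
  calc t * ‖x‖ ^ p + s * ‖y‖ ^ p - ‖t • x + s • y‖ ^ p
      ≤ 2 * (t * s ^ p + s * t ^ p) * ‖x - y‖ ^ p := jensen_gap_norm_rpow_le hp₁ hp₂ ht hs hts x y
    _ ≤ 2 * (t * s + s * t) * ‖x - y‖ ^ p := by gcongr
    _ = 4 * (t * s * ‖x - y‖ ^ p) := by ring

lemma norm_smul_rpow_sub_eq_mul_jensen_gap (hs : 0 < s) (x y : E) :
    ‖s • y‖ ^ p - s ^ (p - 1) * (‖t • x + s • y‖ ^ p - t * ‖x‖ ^ p) =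
      s ^ (p - 1) * (t * ‖x‖ ^ p + s * ‖y‖ ^ p - ‖t • x + s • y‖ ^ p) := by
  rw [norm_smul, Real.norm_of_nonneg hs.le, Real.mul_rpow hs.le (norm_nonneg y)]
  linear_combination (-‖y‖ ^ p) * rpow_sub_one_mul_self hs p

lemma le_norm_smul_rpow_sub (hp₁ : 1 ≤ p) (hp₂ : p ≤ 2) (ht : 0 ≤ t) (hs : 0 < s)
    (hts : t + s = 1) (x y : E) :
    p * (p - 1) / 2 * (t * ‖s • (x - y)‖ ^ 2 * (s * (‖x‖ + ‖y‖)) ^ (p - 2)) ≤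
      ‖s • y‖ ^ p - s ^ (p - 1) * (‖t • x + s • y‖ ^ p - t * ‖x‖ ^ p) := by
  have hpow : s ^ 2 * s ^ (p - 2) = s ^ (p - 1) * s := by
    rw [sq_mul_rpow_sub_two hs.le (by linarith), rpow_sub_one_mul_self hs]
  calc p * (p - 1) / 2 * (t * ‖s • (x - y)‖ ^ 2 * (s * (‖x‖ + ‖y‖)) ^ (p - 2))
      = s ^ (p - 1) * (p * (p - 1) / 2 * (t * s * ‖x - y‖ ^ 2 * (‖x‖ + ‖y‖) ^ (p - 2))) := by
        rw [norm_smul, Real.norm_of_nonneg hs.le, Real.mul_rpow hs.le (by positivity)]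
        linear_combination
          p * (p - 1) / 2 * t * ‖x - y‖ ^ 2 * (‖x‖ + ‖y‖) ^ (p - 2) * hpow
    _ ≤ s ^ (p - 1) * (t * ‖x‖ ^ p + s * ‖y‖ ^ p - ‖t • x + s • y‖ ^ p) := by
        gcongr
        exact le_jensen_gap_norm_rpow hp₁ hp₂ ht hs.le hts x y
    _ = ‖s • y‖ ^ p - s ^ (p - 1) * (‖t • x + s • y‖ ^ p - t * ‖x‖ ^ p) :=
        (norm_smul_rpow_sub_eq_mul_jensen_gap hs x y).symm

lemma norm_smul_rpow_sub_le (hp₁ : 1 ≤ p) (hp₂ : p ≤ 2) (ht : 0 ≤ t) (hs : 0 < s)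
    (hts : t + s = 1) (x y : E) :
    ‖s • y‖ ^ p - s ^ (p - 1) * (‖t • x + s • y‖ ^ p - t * ‖x‖ ^ p) ≤
      4 * (t * ‖s • (x - y)‖ ^ p) := by
  calc ‖s • y‖ ^ p - s ^ (p - 1) * (‖t • x + s • y‖ ^ p - t * ‖x‖ ^ p)
      = s ^ (p - 1) * (t * ‖x‖ ^ p + s * ‖y‖ ^ p - ‖t • x + s • y‖ ^ p) :=
        norm_smul_rpow_sub_eq_mul_jensen_gap hs x y
    _ ≤ s ^ (p - 1) * (4 * (t * s * ‖x - y‖ ^ p)) := by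
        gcongr
        exact jensen_gap_norm_rpow_le_mul hp₁ hp₂ ht hs.le hts x y
    _ = 4 * (t * ‖s • (x - y)‖ ^ p) := by
        rw [norm_smul, Real.norm_of_nonneg hs.le, Real.mul_rpow hs.le (norm_nonneg _)]
        linear_combination 4 * t * ‖x - y‖ ^ p * rpow_sub_one_mul_self hs p

theorem stmt_1_general (hp₁ : 1 < p) (hp₂ : p ≤ 2) (ht₀ : 0 ≤ t) (ht₁ : t ≤ 1) (e z : E) :
    p * (p - 1) / 2 * (t * ‖z - e‖ ^ 2 * (‖z - t • e‖ + (1 - t) * ‖e‖) ^ (p - 2)) ≤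
        ‖z - t • e‖ ^ p - (1 - t) ^ (p - 1) * (‖z‖ ^ p - t * ‖e‖ ^ p) ∧
      ‖z - t • e‖ ^ p - (1 - t) ^ (p - 1) * (‖z‖ ^ p - t * ‖e‖ ^ p) ≤ 4 * (t * ‖z - e‖ ^ p) := by
  rcases ht₁.eq_or_lt with rfl | ht₁
  · have hzp : 0 ≤ ‖z - e‖ ^ p := by positivity
    have hc : p * (p - 1) / 2 ≤ 1 := by nlinarith
    simp only [one_smul, sub_self, zero_mul, add_zero, one_mul, sub_zero,
      Real.zero_rpow (sub_pos.2 hp₁).ne',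
      sq_mul_rpow_sub_two (norm_nonneg (z - e)) (by linarith : p ≠ 0)]
    exact ⟨mul_le_of_le_one_left hzp hc, by linarith⟩
  · have hs : 0 < 1 - t := sub_pos.2 ht₁
    set y := (1 - t)⁻¹ • (z - t • e) 
    have hsy : z - t • e = (1 - t) • y := (smul_inv_smul₀ hs.ne' _).symm
    have hz : z = t • e + (1 - t) • y := by rw [← hsy, add_sub_cancel]
    have hze : ‖z - e‖ = ‖(1 - t) • (e - y)‖ := by
      rw [← norm_neg, hz]
      congr 1
      module
    have hsum : ‖z - t • e‖ + (1 - t) * ‖e‖ = (1 - t) * (‖e‖ + ‖y‖) := by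
      rw [hsy, norm_smul, Real.norm_of_nonneg hs.le]
      ring
    rw [hsum, hze, hsy, hz]
    exact ⟨le_norm_smul_rpow_sub hp₁.le hp₂ ht₀ hs (add_sub_cancel _ _) e y,
      norm_smul_rpow_sub_le hp₁.le hp₂ ht₀ hs (add_sub_cancel _ _) e y⟩

end InnerProductSpace

/-- (Lemma 3.1, case `p ∈ (1,2]`).
There exist constants `c, C > 0` depending only on `p` such that for all `t ∈ [0,1]`
and all `z ∈ ℂ`:
`c t |z-1|² (|z-t| + 1 - t)^{p-2} ≤ |z-t|^p - (1-t)^{p-1} (|z|^p - t) ≤ C t^{p/2} |z-1|^p`.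
(When `z = t = 1` the left-hand side vanishes automatically since `|z-1| = 0`.) -/
theorem stmt_1 (p : ℝ) (hp1 : 1 < p) (hp2 : p ≤ 2) :
    ∃ c C : ℝ, 0 < c ∧ 0 < C ∧
      ∀ (t : ℝ), 0 ≤ t → t ≤ 1 → ∀ z : ℂ,
        c * (t * ‖z - 1‖ ^ (2 : ℝ) * (‖z - (t : ℂ)‖ + 1 - t) ^ (p - 2))
            ≤ ‖z - (t : ℂ)‖ ^ p - (1 - t) ^ (p - 1) * (‖z‖ ^ p - t)
          ∧ ‖z - (t : ℂ)‖ ^ p - (1 - t) ^ (p - 1) * (‖z‖ ^ p - t)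
            ≤ C * (t ^ (p / 2) * ‖z - 1‖ ^ p) := by
  refine ⟨p * (p - 1) / 2, 4, by nlinarith, by norm_num, fun t ht₀ ht₁ z ↦ ?_⟩
  have h := stmt_1_general hp1 hp2 ht₀ ht₁ 1 z
  have htp : t ≤ t ^ (p / 2) := Real.self_le_rpow_of_le_one ht₀ ht₁ (by linarith)
  simp only [Complex.real_smul, mul_one, norm_one, Real.one_rpow, ← add_sub_assoc] at h
  rw [Real.rpow_two]
  exact ⟨h.1, h.2.trans (by gcongr)⟩
end
end

section
/- Let ℓ ∈ ℕ and p > 1. Suppose 𝔤 ∈ H^ℓ satisfies (A1): ∇^k 𝔤_n > 0 for all n ≥ ℓ and k ∈ {0,…,ℓ}, (A2): −Δ_p^{(ℓ−k)}∇^k 𝔤_n ≥ 0 for all n ≥ ℓ and k ∈ {1,…,ℓ−1}, and (A3): −Δ_p^{(ℓ)}𝔤_n ≥ 0 for all n ≥ ℓ. Then the sequence ρ(𝔤)_n := (−Δ_p^{(ℓ)}𝔤_n)/𝔤_n^{p−1} is nonnegative for all n ≥ ℓ, and for every u ∈ H_0^ℓ one has ∑_{n=ℓ}^∞ |∇^ℓ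 u_n|^p ≥ ∑_{n=ℓ}^∞ ρ(𝔤)_n·|u_n|^p. -/
open scoped BigOperators
open Finset Filter Asymptotics

noncomputable section

/-!
For real `g` and vector-valued `u` vanishing below `m`, Picone's inequality bounds the discrete
gradient of `|u|^p / g^(p-1)` by `|∇u|^p / (∇g)^(p-1)`; it is the triangle inequality combined with
the joint subadditivity of `(x, d) ↦ x^p / d^(p-1)`. Multiplying by a weight `w ≥ 0` and summing by
parts gives `∑ (-div w) |u|^p / g^(p-1) ≤ ∑ w |∇u|^p / (∇g)^(p-1)`. With
`w = -Δ_p^{(ℓ-1)} ∇g`, so that `-div w = -Δ_p^{(ℓ)} g`, this passes from `(g, u)` to `(∇g, ∇u)`.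
After `ℓ` passages the weight is `(∇^ℓ g)^(p-1) / (∇^ℓ g)^(p-1) = 1`.
-/

/-- The discrete gradient `∇` of a sequence with values in an arbitrary additive group. It is
definitionally `rgrad` for real sequences and `dgrad` for complex ones. -/
def bwdDiff {G : Type*} [AddGroup G] (u : ℤ → G) : ℤ → G := fun n => u n - u (n - 1)

/-- The Hardy weight `ρ(g) = (-Δ_p^{(ℓ)} g) / g^(p-1)` of order `ℓ`; the real power in the
denominator makes it meaningful only where `g` is positive. -/
def hardyWeight (p : ℝ) (ℓ : ℕ) (g : ℤ → ℝ) : ℤ → ℝ := fun n => pLap p ℓ g n / g n ^ (p - 1)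

section BackwardDifference

variable {G : Type*} [AddGroup G]

theorem bwdDiff_eq_zero_of_lt {m : ℤ} {u : ℤ → G} (hu : ∀ n < m, u n = 0) :
    ∀ n < m, bwdDiff u n = 0 := by
  intro n hn
  simp [bwdDiff, hu n hn, hu (n - 1) (by lia)]

theorem hasFiniteSupport_bwdDiff {u : ℤ → G} (hu : u.HasFiniteSupport) :
    (bwdDiff u).HasFiniteSupport :=
  hu.fun_sub (hu.fun_comp_of_injective (sub_left_injective (b := 1)))

theorem hasFiniteSupport_bwdDiff_iterate {u : ℤ → G} (hu : u.HasFiniteSupport) (k : ℕ) :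
    (bwdDiff^[k] u).HasFiniteSupport :=
  Function.Iterate.rec (fun v : ℤ → G => v.HasFiniteSupport) hu
    (fun _ => hasFiniteSupport_bwdDiff) k

end BackwardDifference

section RealSequences

variable {m : ℤ} {h : ℤ → ℝ}

theorem pos_of_rgrad_pos (hh : ∀ n < m, h n = 0) (hdh : ∀ n, m ≤ n → 0 < rgrad h n) :
    ∀ n, m ≤ n → 0 < h n := by
  intro n hn
  induction n, hn using Int.leInduction with
  | base => simpa [rgrad, hh (m - 1) (by lia)] using hdh m le_rfl
  | succ n hn ih =>
    have hdiff : 0 < h (n + 1) - h n := by simpa [rgrad] using hdh (n + 1) (by lia)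
    exact ih.trans (sub_pos.1 hdiff)

theorem pos_of_rgrad_iterate_pos {k : ℕ} (hh : ∀ n < m, h n = 0)
    (hdh : ∀ n, m ≤ n → 0 < rgrad^[k] h n) : ∀ n, m ≤ n → 0 < h n := by
  induction k generalizing h with
  | zero => exact hdh
  | succ k ih => exact pos_of_rgrad_pos hh (ih (bwdDiff_eq_zero_of_lt hh) hdh)

theorem sum_range_neg_rdiv_mul (w F : ℤ → ℝ) (m : ℤ) (N : ℕ) :
    ∑ n ∈ range N, -rdiv w (m + n) * F (m + n) =
      ∑ n ∈ range N, w (m + n) * rgrad F (m + n) + w m * F (m - 1)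
        - w (m + N) * F (m + N - 1) := by
  induction N with
  | zero => simp
  | succ N ih =>
    rw [sum_range_succ, sum_range_succ, ih]
    have hlast : m + ((N + 1 : ℕ) : ℤ) - 1 = m + N := by push_cast; ring
    rw [hlast]
    simp only [rdiv, rgrad, Nat.cast_succ, add_assoc]
    ring

theorem pLap_zero_of_pos (p : ℝ) {n : ℤ} (hn : 0 < h n) : pLap p 0 h n = h n ^ (p - 1) := by
  simp [pLap, sgnPow, abs_of_pos hn, Real.rpow_sub_one hn.ne', mul_div_cancel₀ _ hn.ne']

theorem pLap_zero_nonneg (p : ℝ) {n : ℤ} (hn : 0 < h n) : 0 ≤ pLap p 0 h n :=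
  (pLap_zero_of_pos p hn).symm ▸ Real.rpow_nonneg hn.le _

theorem pLap_succ (p : ℝ) (k : ℕ) (g : ℤ → ℝ) (n : ℤ) :
    pLap p (k + 1) g n = -rdiv (pLap p k (rgrad g)) n := by
  simp only [pLap, Function.iterate_succ_apply rgrad, Function.iterate_succ_apply' rdiv, rdiv]
  ring

end RealSequences

theorem add_rpow_div_add_rpow_sub_one_le {p : ℝ} (hp : 1 ≤ p) {x y c d : ℝ} (hx : 0 ≤ x)
    (hy : 0 ≤ y) (hc : 0 < c) (hd : 0 < d) :
    (x + y) ^ p / (c + d) ^ (p - 1) ≤ x ^ p / c ^ (p - 1) + y ^ p / d ^ (p - 1) := by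
  have perspective {z t : ℝ} (hz : 0 ≤ z) (ht : 0 < t) :
      z ^ p / t ^ (p - 1) = t * (z / t) ^ p := by
    rw [Real.div_rpow hz ht.le, Real.rpow_sub_one ht.ne']
    field_simp
  have hcd : 0 < c + d := add_pos hc hd
  have hmean : (x + y) / (c + d) = c / (c + d) * (x / c) + d / (c + d) * (y / d) := by
    field_simp
  have hconvex : ((x + y) / (c + d)) ^ p ≤
      c / (c + d) * (x / c) ^ p + d / (c + d) * (y / d) ^ p := by
    rw [hmean]
    exact (convexOn_rpow hp).2 (div_nonneg hx hc.le) (div_nonneg hy hd.le) (by positivity)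
      (by positivity) (by field_simp)
  rw [perspective (add_nonneg hx hy) hcd, perspective hx hc, perspective hy hd]
  calc (c + d) * ((x + y) / (c + d)) ^ p
      ≤ (c + d) * (c / (c + d) * (x / c) ^ p + d / (c + d) * (y / d) ^ p) := by gcongr
    _ = c * (x / c) ^ p + d * (y / d) ^ p := by field_simp

section Hardy

variable {E : Type*} [SeminormedAddGroup E] {p : ℝ} {m : ℤ} {g h : ℤ → ℝ} {u : ℤ → E}

theorem rgrad_norm_rpow_div_le (hp : 1 ≤ p) (hh : ∀ n < m, h n = 0) (hu : ∀ n < m, u n = 0)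
    (hdh : ∀ n, m ≤ n → 0 < rgrad h n) {n : ℤ} (hn : m ≤ n) :
    rgrad (fun k => ‖u k‖ ^ p / h k ^ (p - 1)) n ≤ ‖bwdDiff u n‖ ^ p / rgrad h n ^ (p - 1) := by
  rcases hn.eq_or_lt with rfl | hlt
  · simp [rgrad, bwdDiff, hh (m - 1) (by lia), hu (m - 1) (by lia),
      Real.zero_rpow (by linarith : p ≠ 0)]
  · have hpos := pos_of_rgrad_pos hh hdh
    have hhn := hpos n hn
    have hsplit : rgrad h n + h (n - 1) = h n := sub_add_cancel _ _
    refine sub_le_iff_le_add.2 ?_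
    calc ‖u n‖ ^ p / h n ^ (p - 1)
        ≤ (‖bwdDiff u n‖ + ‖u (n - 1)‖) ^ p / h n ^ (p - 1) := by
          gcongr
          exact norm_le_norm_sub_add _ _
      _ ≤ ‖bwdDiff u n‖ ^ p / rgrad h n ^ (p - 1) + ‖u (n - 1)‖ ^ p / h (n - 1) ^ (p - 1) := by
          rw [← hsplit]
          exact add_rpow_div_add_rpow_sub_one_le hp (norm_nonneg _) (norm_nonneg _) (hdh n hn)
            (hpos (n - 1) (by lia))

theorem sum_range_neg_rdiv_div_mul_norm_rpow_le (hp : 1 ≤ p) (hh : ∀ n < m, h n = 0)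
    (hu : ∀ n < m, u n = 0) (hdh : ∀ n, m ≤ n → 0 < rgrad h n) {w : ℤ → ℝ}
    (hw : ∀ n, m ≤ n → 0 ≤ w n) (N : ℕ) :
    ∑ n ∈ range N, -rdiv w (m + n) / h (m + n) ^ (p - 1) * ‖u (m + n)‖ ^ p ≤
      ∑ n ∈ range N, w (m + n) / rgrad h (m + n) ^ (p - 1) * ‖bwdDiff u (m + n)‖ ^ p := by
  set F : ℤ → ℝ := fun k => ‖u k‖ ^ p / h k ^ (p - 1) with hF
  have hF_zero : F (m - 1) = 0 := by
    simp [hF, hu (m - 1) (by lia), Real.zero_rpow (by linarith : p ≠ 0)]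
  have hF_nonneg (n : ℤ) : 0 ≤ F n := by
    have hhn : 0 ≤ h n := (lt_or_ge n m).elim (fun hn => (hh n hn).ge)
      (fun hn => (pos_of_rgrad_pos hh hdh n hn).le)
    positivity
  have hboundary : 0 ≤ w (m + N) * F (m + N - 1) :=
    mul_nonneg (hw _ (by lia)) (hF_nonneg _)
  calc ∑ n ∈ range N, -rdiv w (m + n) / h (m + n) ^ (p - 1) * ‖u (m + n)‖ ^ p
      = ∑ n ∈ range N, -rdiv w (m + n) * F (m + n) := by
        simp only [hF, div_mul_eq_mul_div₀, mul_div_assoc]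
    _ ≤ ∑ n ∈ range N, w (m + n) * rgrad F (m + n) := by
        rw [sum_range_neg_rdiv_mul, hF_zero]
        linarith
    _ ≤ ∑ n ∈ range N, w (m + n) * (‖bwdDiff u (m + n)‖ ^ p / rgrad h (m + n) ^ (p - 1)) := by
        gcongr with n
        · exact hw _ (by lia)
        · exact rgrad_norm_rpow_div_le hp hh hu hdh (by lia)
    _ = _ := by simp only [div_mul_eq_mul_div₀, mul_div_assoc]

theorem sum_range_hardyWeight_mul_norm_rpow_le (hp : 1 ≤ p) {ℓ : ℕ} (hg : ∀ n < m, g n = 0)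
    (hpos : ∀ n, m ≤ n → 0 < rgrad^[ℓ] g n)
    (hLap : ∀ k, 1 ≤ k → k < ℓ → ∀ n, m ≤ n → 0 ≤ pLap p (ℓ - k) (rgrad^[k] g) n)
    (hu : ∀ n < m, u n = 0) (N : ℕ) :
    ∑ n ∈ range N, hardyWeight p ℓ g (m + n) * ‖u (m + n)‖ ^ p ≤
      ∑ n ∈ range N, ‖bwdDiff^[ℓ] u (m + n)‖ ^ p := by
  induction ℓ generalizing g u with
  | zero =>
    refine sum_le_sum fun n _ => le_of_eq ?_
    have hgn : 0 < g (m + n) := hpos _ (by lia)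
    simp [hardyWeight, pLap_zero_of_pos p hgn, (Real.rpow_pos_of_pos hgn (p - 1)).ne']
  | succ ℓ ih =>
    have hdg := bwdDiff_eq_zero_of_lt hg
    have hdg_pos : ∀ n, m ≤ n → 0 < rgrad g n := pos_of_rgrad_iterate_pos hdg hpos
    have hw : ∀ n, m ≤ n → 0 ≤ pLap p ℓ (rgrad g) n := by
      intro n hn
      rcases ℓ.eq_zero_or_pos with rfl | hℓ
      · exact pLap_zero_nonneg p (hdg_pos n hn)
      · exact hLap 1 le_rfl (by lia) n hn
    have hLap_grad : ∀ k, 1 ≤ k → k < ℓ → ∀ n, m ≤ n →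
        0 ≤ pLap p (ℓ - k) (rgrad^[k] (rgrad g)) n := fun k _ hk => by
      simpa only [Nat.add_sub_add_right, Function.iterate_succ_apply] using
        hLap (k + 1) (by lia) (by lia)
    calc ∑ n ∈ range N, hardyWeight p (ℓ + 1) g (m + n) * ‖u (m + n)‖ ^ p
        ≤ ∑ n ∈ range N, hardyWeight p ℓ (rgrad g) (m + n) * ‖bwdDiff u (m + n)‖ ^ p := by
          simpa only [hardyWeight, pLap_succ] using
            sum_range_neg_rdiv_div_mul_norm_rpow_le hp hg hu hdg_pos hw N
      _ ≤ ∑ n ∈ range N, ‖bwdDiff^[ℓ + 1] u (m + n)‖ ^ p :=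
          ih hdg hpos hLap_grad (bwdDiff_eq_zero_of_lt hu)

theorem summable_norm_rpow_of_hasFiniteSupport (hp : p ≠ 0) (m : ℤ) (hu : u.HasFiniteSupport) :
    Summable fun n : ℕ => ‖u (m + n)‖ ^ p := by
  refine summable_of_hasFiniteSupport ?_
  have hshift : (fun n : ℕ => u (m + n)).HasFiniteSupport :=
    hu.fun_comp_of_injective ((add_right_injective m).comp Nat.cast_injective)
  exact hshift.fun_comp (g := fun x => ‖x‖ ^ p) (by simp [Real.zero_rpow hp])

end Hardy

theorem stmt_4_general {E : Type*} [SeminormedAddGroup E] {p : ℝ} (hp : 1 ≤ p) {ℓ : ℕ} {m : ℤ}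
    {g : ℤ → ℝ} (hg : ∀ n < m, g n = 0)
    (hpos : ∀ n, m ≤ n → 0 < rgrad^[ℓ] g n)
    (hLap : ∀ k < ℓ, ∀ n, m ≤ n → 0 ≤ pLap p (ℓ - k) (rgrad^[k] g) n) :
    (∀ n, m ≤ n → 0 ≤ hardyWeight p ℓ g n) ∧
      ∀ u : ℤ → E, (∀ n < m, u n = 0) → Summable (fun n : ℕ => ‖bwdDiff^[ℓ] u (m + n)‖ ^ p) →
        Summable (fun n : ℕ => hardyWeight p ℓ g (m + n) * ‖u (m + n)‖ ^ p) ∧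
          tsumFrom m (fun n => hardyWeight p ℓ g n * ‖u n‖ ^ p) ≤
            tsumFrom m (fun n => ‖bwdDiff^[ℓ] u n‖ ^ p) := by
  have hg_pos := pos_of_rgrad_iterate_pos hg hpos
  have hLap_zero : ∀ n, m ≤ n → 0 ≤ pLap p ℓ g n := by
    intro n hn
    rcases ℓ.eq_zero_or_pos with rfl | hℓ
    · exact pLap_zero_nonneg p (hg_pos n hn)
    · exact hLap 0 hℓ n hn
  have hweight : ∀ n, m ≤ n → 0 ≤ hardyWeight p ℓ g n := fun n hn =>
    div_nonneg (hLap_zero n hn) (Real.rpow_nonneg (hg_pos n hn).le _)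
  refine ⟨hweight, fun u hu hsum => ?_⟩
  have hterm (n : ℕ) : 0 ≤ hardyWeight p ℓ g (m + n) * ‖u (m + n)‖ ^ p :=
    mul_nonneg (hweight _ (by lia)) (by positivity)
  have hpartial (N : ℕ) : ∑ n ∈ range N, hardyWeight p ℓ g (m + n) * ‖u (m + n)‖ ^ p ≤
      tsumFrom m (fun n => ‖bwdDiff^[ℓ] u n‖ ^ p) :=
    (sum_range_hardyWeight_mul_norm_rpow_le hp hg hpos (fun k _ => hLap k) hu N).trans
      (hsum.sum_le_tsum _ fun _ _ => by positivity)
  exact ⟨summable_of_sum_range_le hterm hpartial, Real.tsum_le_of_sum_range_le hterm hpartial⟩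

/-- Theorem 2.4, first part.
Under assumptions (A1), (A2), (A3) on `𝔤 ∈ H^ℓ`, the sequence
`ρ(𝔤)_n = (-Δ_p^{(ℓ)}𝔤_n)/𝔤_n^{p-1}` is nonnegative for `n ≥ ℓ` and is a discrete
`p`-Hardy–Rellich–Birman weight: `∑_{n≥ℓ} |∇^ℓ u_n|^p ≥ ∑_{n≥ℓ} ρ(𝔤)_n |u_n|^p` for all
`u ∈ H_0^ℓ`. -/
theorem stmt_4 (ℓ : ℕ) (hℓ : 0 < ℓ) (p : ℝ) (hp : 1 < p) (g : ℤ → ℝ)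
    (hH : ∀ n : ℤ, n < (ℓ : ℤ) → g n = 0)
    (hA1 : ∀ n : ℤ, (ℓ : ℤ) ≤ n → ∀ k : ℕ, k ≤ ℓ → 0 < rgrad^[k] g n)
    (hA2 : ∀ n : ℤ, (ℓ : ℤ) ≤ n → ∀ k : ℕ, 1 ≤ k → k < ℓ →
        0 ≤ pLap p (ℓ - k) (rgrad^[k] g) n)
    (hA3 : ∀ n : ℤ, (ℓ : ℤ) ≤ n → 0 ≤ pLap p ℓ g n) :
    (∀ n : ℤ, (ℓ : ℤ) ≤ n → 0 ≤ pLap p ℓ g n / g n ^ (p - 1))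
      ∧ ∀ u : ℤ → ℂ,
          (∀ n : ℤ, n < (ℓ : ℤ) → u n = 0) →
          (Function.support u).Finite →
            tsumFrom ℓ (fun n => pLap p ℓ g n / g n ^ (p - 1) * ‖u n‖ ^ p)
              ≤ tsumFrom ℓ (fun n => ‖dgrad^[ℓ] u n‖ ^ p) := by
  have hgeneral := stmt_4_general (E := ℂ) hp.le hH (fun n hn => hA1 n hn ℓ le_rfl)
    (fun k hk n hn => k.eq_zero_or_pos.elim (fun h => h ▸ hA3 n hn) fun h => hA2 n hn k h hk)
  exact ⟨hgeneral.1, fun u hu hfin => (hgeneral.2 u hu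
    (summable_norm_rpow_of_hasFiniteSupport (by linarith) ℓ
      (hasFiniteSupport_bwdDiff_iterate hfin ℓ))).2⟩
end
end

section
/- Let q > 1. The function g(x) := Γ(x+1/q)/Γ(x+1) is logarithmically completely monotone on (0,∞); that is, g > 0 on (0,∞) and the function h(x) := −(log g(x))' = ψ(x+1) − ψ(x+1/q) satisfies (−1)^k h^{(k)}(x) ≥ 0 for every integer k ≥ 0 and every x > 0 (in fact these inequalities are strict). -/
noncomputable section

/-!
Write `ψ` for the digamma function. It is monotone on `(0, ∞)` because `log Γ` is convex, and
`ψ (x + 1) = ψ x + 1 / x`. Telescoping this recurrence expresses a difference of values of `ψ` as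
`ψ x - ψ y = ∑ n, (1 / (y + n) - 1 / (x + n))`: the remainder vanishes since `ψ` is monotone and its
increments over intervals of length one tend to zero. Differentiating term by term,
`(-1) ^ k * ψ⁽ᵏ⁺¹⁾ x = (k + 1)! * ∑ n, 1 / (x + n) ^ (k + 2) > 0`, so every `(-1) ^ k * ψ⁽ᵏ⁾` is
strictly increasing on `(0, ∞)`. For `g x = Γ (x + a) / Γ (x + b)` with `a < b`, the function
`-(log g)' x = ψ (x + b) - ψ (x + a)` inherits the required signs.
-/

open Filter Set Topology
open scoped Nat

lemma tendsto_add_natCast_sub_atTop_zero {f : ℝ → ℝ}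
    (hstep : Tendsto (fun x ↦ f (x + 1) - f x) atTop (𝓝 0)) (m : ℕ) :
    Tendsto (fun x ↦ f (x + m) - f x) atTop (𝓝 0) := by
  induction m with
  | zero => simp
  | succ m ih =>
    have hshift := hstep.comp (tendsto_atTop_add_const_right atTop (m : ℝ) tendsto_id)
    simpa [Function.comp_def, add_assoc] using hshift.add ih

lemma tendsto_add_sub_atTop_zero_of_monotoneOn {f : ℝ → ℝ} {c d : ℝ} (hf : MonotoneOn f (Ioi c))
    (hstep : Tendsto (fun x ↦ f (x + 1) - f x) atTop (𝓝 0)) (hd : 0 ≤ d) :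
    Tendsto (fun x ↦ f (x + d) - f x) atTop (𝓝 0) := by
  refine tendsto_of_tendsto_of_tendsto_of_le_of_le' tendsto_const_nhds
    (tendsto_add_natCast_sub_atTop_zero hstep ⌈d⌉₊) ?_ ?_ <;>
    filter_upwards [eventually_gt_atTop c] with x hx
  · exact sub_nonneg.2 (hf hx (hx.trans_le (by linarith)) (by linarith))
  · have hle : x + d ≤ x + ⌈d⌉₊ := by gcongr; exact Nat.le_ceil d
    have hxd : c < x + d := by linarith
    exact sub_le_sub_right (hf hxd (hxd.trans_le hle) hle) _

lemma summable_inv_add_natCast_pow (x : ℝ) {k : ℕ} (hk : 1 < k) :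
    Summable fun n : ℕ ↦ ((x + n) ^ k)⁻¹ := by
  have habs := (Real.summable_one_div_nat_add_rpow x k).2 (mod_cast hk)
  refine Summable.of_norm (habs.congr fun n ↦ ?_)
  rw [Real.rpow_natCast, norm_inv, norm_pow, Real.norm_eq_abs, one_div, add_comm]

lemma hasDerivAt_inv_add_pow {x c : ℝ} (h : x + c ≠ 0) (k : ℕ) :
    HasDerivAt (fun y : ℝ ↦ ((y + c) ^ k)⁻¹) (-(k * ((x + c) ^ (k + 1))⁻¹)) x := by
  have hzpow := (hasDerivAt_zpow (-k : ℤ) (x + c) (.inl h)).comp_add_const x c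
  refine (hzpow.congr_deriv ?_).congr_of_eventuallyEq (.of_forall fun y ↦ by simp)
  rw [← neg_add', zpow_neg]
  norm_cast
  simp

/-- The constants `u n` make the case `k = 1`, where `∑ 1 / (y + n)` diverges, available too. -/
lemma hasDerivAt_tsum_inv_add_natCast_pow_sub {k : ℕ} (hk : k ≠ 0) {u : ℕ → ℝ} {x : ℝ}
    (hx : 0 < x) (hu : Summable fun n : ℕ ↦ ((x + n) ^ k)⁻¹ - u n) :
    HasDerivAt (fun y : ℝ ↦ ∑' n : ℕ, (((y + n) ^ k)⁻¹ - u n))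
      (-(k * ∑' n : ℕ, ((x + n) ^ (k + 1))⁻¹)) x := by
  have hbound : Summable fun n : ℕ ↦ (k : ℝ) * ((x / 2 + n) ^ (k + 1))⁻¹ :=
    (summable_inv_add_natCast_pow _ (by lia)).mul_left _
  have hmem : x ∈ Ioi (x / 2) := half_lt_self hx
  have hpos {y : ℝ} (hy : y ∈ Ioi (x / 2)) : 0 < y := (half_pos hx).trans hy
  have hterm (n : ℕ) (y : ℝ) (hy : y ∈ Ioi (x / 2)) :
      HasDerivAt (fun y : ℝ ↦ ((y + n) ^ k)⁻¹ - u n) (-(k * ((y + n) ^ (k + 1))⁻¹)) y :=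
    (hasDerivAt_inv_add_pow (by have := hpos hy; positivity) k).sub_const (u n)
  have hle (n : ℕ) (y : ℝ) (hy : y ∈ Ioi (x / 2)) :
      ‖-(k * ((y + n) ^ (k + 1))⁻¹)‖ ≤ k * ((x / 2 + n) ^ (k + 1))⁻¹ := by
    have hy₀ := hpos hy
    rw [norm_neg, Real.norm_of_nonneg (by positivity)]
    gcongr
    exact hy.le
  rw [← tsum_mul_left, ← tsum_neg]
  exact hasDerivAt_tsum_of_isPreconnected hbound isOpen_Ioi isPreconnected_Ioi hterm hle hmem hu
    hmem

lemma hasDerivAt_tsum_inv_add_natCast_pow {k : ℕ} (hk : 1 < k) {x : ℝ} (hx : 0 < x) :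
    HasDerivAt (fun y : ℝ ↦ ∑' n : ℕ, ((y + n) ^ k)⁻¹)
      (-(k * ∑' n : ℕ, ((x + n) ^ (k + 1))⁻¹)) x := by
  simpa using hasDerivAt_tsum_inv_add_natCast_pow_sub (u := 0) (by lia : k ≠ 0) hx
    (by simpa using summable_inv_add_natCast_pow x hk)

lemma tsum_inv_add_natCast_pow_pos {k : ℕ} (hk : 1 < k) {x : ℝ} (hx : 0 < x) :
    0 < ∑' n : ℕ, ((x + n) ^ k)⁻¹ :=
  (summable_inv_add_natCast_pow x hk).tsum_pos (fun n ↦ by positivity) 0 (by positivity)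

/-- The digamma function `ψ = Γ' / Γ` of a real variable. It takes junk values at the poles
`0, -1, -2, …` of `Γ`. -/
def digamma : ℝ → ℝ := logDeriv Real.Gamma

lemma ne_neg_natCast_of_pos {x : ℝ} (hx : 0 < x) (m : ℕ) : x ≠ -m :=
  ((neg_nonpos.2 m.cast_nonneg).trans_lt hx).ne'

lemma analyticAt_Gamma {x : ℝ} (hx : ∀ m : ℕ, x ≠ -m) : AnalyticAt ℝ Real.Gamma x := by
  have hne : Complex.Gamma x ≠ 0 := by
    rw [Complex.Gamma_ofReal]
    exact mod_cast Real.Gamma_ne_zero hx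
  have hcomplex : AnalyticAt ℂ Complex.Gamma x := by
    simpa [Pi.inv_def] using
      (Complex.differentiable_one_div_Gamma.analyticAt x).inv (inv_ne_zero hne)
  simpa [Complex.Gamma_ofReal] using hcomplex.re_ofReal

lemma analyticAt_digamma {x : ℝ} (hx : ∀ m : ℕ, x ≠ -m) : AnalyticAt ℝ digamma x :=
  (analyticAt_Gamma hx).deriv.div (analyticAt_Gamma hx) (Real.Gamma_ne_zero hx)

lemma digamma_add_one {x : ℝ} (hx : ∀ m : ℕ, x ≠ -m) : digamma (x + 1) = digamma x + x⁻¹ := by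
  have hx₀ : x ≠ 0 := by simpa using hx 0
  have hrec : (fun y ↦ Real.Gamma (y + 1)) =ᶠ[𝓝 x] fun y ↦ y * Real.Gamma y := by
    filter_upwards [eventually_ne_nhds hx₀] with y hy using Real.Gamma_add_one hy
  calc digamma (x + 1)
      = logDeriv (fun y ↦ Real.Gamma (y + 1)) x := by
        simp only [digamma, logDeriv_apply, deriv_comp_add_const]
    _ = logDeriv (fun y ↦ y * Real.Gamma y) x := (logDeriv_congr_nhds hrec).eq_of_nhds
    _ = digamma x + x⁻¹ := by
        rw [logDeriv_mul x hx₀ (Real.Gamma_ne_zero hx) differentiableAt_fun_id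
          (Real.differentiableAt_Gamma hx), logDeriv_id', one_div, add_comm, digamma]

lemma monotoneOn_digamma : MonotoneOn digamma (Ioi 0) := by
  have hdiff (x : ℝ) (hx : 0 < x) : DifferentiableAt ℝ Real.Gamma x :=
    Real.differentiableAt_Gamma (ne_neg_natCast_of_pos hx)
  have hderiv := Real.convexOn_log_Gamma.monotoneOn_deriv fun x hx ↦
    (hdiff x hx).log (Real.Gamma_pos_of_pos hx).ne'
  exact hderiv.congr fun x hx ↦
    Real.deriv_log_comp_eq_logDeriv (hdiff x hx) (Real.Gamma_pos_of_pos hx).ne'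

lemma tendsto_digamma_add_sub_atTop_zero {d : ℝ} (hd : 0 ≤ d) :
    Tendsto (fun x ↦ digamma (x + d) - digamma x) atTop (𝓝 0) := by
  refine tendsto_add_sub_atTop_zero_of_monotoneOn monotoneOn_digamma ?_ hd
  refine tendsto_inv_atTop_zero.congr' ?_
  filter_upwards [eventually_gt_atTop 0] with x hx
  rw [digamma_add_one (ne_neg_natCast_of_pos hx), add_sub_cancel_left]

lemma sum_range_inv_sub_inv_eq_digamma {x y : ℝ} (hx : 0 < x) (hy : 0 < y) (N : ℕ) :
    ∑ n ∈ Finset.range N, ((y + n)⁻¹ - (x + n)⁻¹) =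
      (digamma x - digamma y) - (digamma (x + N) - digamma (y + N)) := by
  have hstep {z : ℝ} (hz : 0 < z) (n : ℕ) :
      digamma (z + (n + 1 : ℕ)) = digamma (z + n) + (z + n)⁻¹ := by
    rw [← digamma_add_one (ne_neg_natCast_of_pos (by positivity)), Nat.cast_succ, add_assoc]
  calc ∑ n ∈ Finset.range N, ((y + n)⁻¹ - (x + n)⁻¹)
      = ∑ n ∈ Finset.range N, ((digamma (x + n) - digamma (y + n)) -
          (digamma (x + (n + 1 : ℕ)) - digamma (y + (n + 1 : ℕ)))) := by
        refine Finset.sum_congr rfl fun n _ ↦ ?_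
        rw [hstep hx, hstep hy]
        ring
    _ = (digamma x - digamma y) - (digamma (x + N) - digamma (y + N)) := by
        rw [Finset.sum_range_sub' fun n : ℕ ↦ digamma (x + n) - digamma (y + n)]
        simp only [Nat.cast_zero, add_zero]

lemma hasSum_inv_sub_inv_digamma {x y : ℝ} (hx : 0 < x) (hy : 0 < y) :
    HasSum (fun n : ℕ ↦ (y + n)⁻¹ - (x + n)⁻¹) (digamma x - digamma y) := by
  wlog hyx : y ≤ x generalizing x y
  · simpa only [neg_sub] using (this hy hx (le_of_not_ge hyx)).neg
  have hterm (n : ℕ) : 0 ≤ (y + n)⁻¹ - (x + n)⁻¹ := sub_nonneg.2 (by gcongr)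
  have hshift : Tendsto (fun N : ℕ ↦ y + N) atTop atTop :=
    tendsto_atTop_add_const_left _ y tendsto_natCast_atTop_atTop
  have hrem : Tendsto (fun N : ℕ ↦ digamma (x + N) - digamma (y + N)) atTop (𝓝 0) :=
    ((tendsto_digamma_add_sub_atTop_zero (sub_nonneg.2 hyx)).comp hshift).congr fun N ↦ by
      rw [Function.comp_apply, show y + N + (x - y) = x + N by ring]
  rw [hasSum_iff_tendsto_nat_of_nonneg hterm]
  simpa only [sum_range_inv_sub_inv_eq_digamma hx hy, sub_zero] using hrem.const_sub _

lemma hasDerivAt_digamma {x : ℝ} (hx : 0 < x) :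
    HasDerivAt digamma (∑' n : ℕ, ((x + n) ^ 2)⁻¹) x := by
  have hseries : digamma =ᶠ[𝓝 x]
      fun y ↦ digamma x - ∑' n : ℕ, (((y + n) ^ 1)⁻¹ - (x + n)⁻¹) := by
    filter_upwards [lt_mem_nhds hx] with y hy
    simp only [pow_one, (hasSum_inv_sub_inv_digamma hx hy).tsum_eq, sub_sub_cancel]
  have hderiv := hasDerivAt_tsum_inv_add_natCast_pow_sub one_ne_zero
    (u := fun n ↦ (x + n)⁻¹) hx (by simp)
  simpa using (hderiv.const_sub (digamma x)).congr_of_eventuallyEq hseries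

lemma iteratedDeriv_succ_digamma (k : ℕ) {x : ℝ} (hx : 0 < x) :
    iteratedDeriv (k + 1) digamma x =
      (-1) ^ k * (k + 1)! * ∑' n : ℕ, ((x + n) ^ (k + 2))⁻¹ := by
  induction k generalizing x with
  | zero => simpa using (hasDerivAt_digamma hx).deriv
  | succ k ih =>
    have hderiv := (hasDerivAt_tsum_inv_add_natCast_pow (by lia : 1 < k + 2) hx).const_mul
      ((-1) ^ k * ((k + 1)! : ℝ))
    rw [iteratedDeriv_succ, EventuallyEq.deriv_eq ((lt_mem_nhds hx).mono fun y hy ↦ ih hy),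
      hderiv.deriv, Nat.factorial_succ (k + 1)]
    push_cast
    ring

lemma neg_one_pow_mul_iteratedDeriv_succ_digamma_pos (k : ℕ) {x : ℝ} (hx : 0 < x) :
    0 < (-1) ^ k * iteratedDeriv (k + 1) digamma x := by
  have hsum := tsum_inv_add_natCast_pow_pos (by lia : 1 < k + 2) hx
  rw [iteratedDeriv_succ_digamma k hx, ← mul_assoc, ← mul_assoc, ← mul_pow, neg_one_mul, neg_neg,
    one_pow, one_mul]
  positivity

lemma strictMonoOn_neg_one_pow_mul_iteratedDeriv_digamma (k : ℕ) :
    StrictMonoOn (fun x ↦ (-1) ^ k * iteratedDeriv k digamma x) (Ioi 0) := by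
  have hanalytic (x : ℝ) (hx : 0 < x) : AnalyticAt ℝ (iteratedDeriv k digamma) x := by
    rw [iteratedDeriv_eq_iterate]
    exact (analyticAt_digamma (ne_neg_natCast_of_pos hx)).iterated_deriv k
  refine strictMonoOn_of_deriv_pos (convex_Ioi 0)
    (fun x hx ↦ ((hanalytic x hx).continuousAt.const_mul _).continuousWithinAt) fun x hx ↦ ?_
  rw [interior_Ioi] at hx
  rw [deriv_const_mul _ (hanalytic x hx).differentiableAt, ← iteratedDeriv_succ]
  exact neg_one_pow_mul_iteratedDeriv_succ_digamma_pos k hx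

section GammaRatio

variable {a b x : ℝ}

lemma neg_deriv_log_Gamma_div_Gamma (ha : 0 < x + a) (hb : 0 < x + b) :
    -deriv (fun z ↦ Real.log (Real.Gamma (z + a) / Real.Gamma (z + b))) x =
      digamma (x + b) - digamma (x + a) := by
  have hne {c : ℝ} (hc : 0 < x + c) : Real.Gamma (x + c) ≠ 0 := (Real.Gamma_pos_of_pos hc).ne'
  have hdiff {c : ℝ} (hc : 0 < x + c) : DifferentiableAt ℝ (fun z ↦ Real.Gamma (z + c)) x :=
    differentiableAt_comp_add_const.2
      (Real.differentiableAt_Gamma (ne_neg_natCast_of_pos hc))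
  have hshift (c : ℝ) : logDeriv (fun z ↦ Real.Gamma (z + c)) x = digamma (x + c) := by
    simp only [digamma, logDeriv_apply, deriv_comp_add_const]
  have hlog := Real.deriv_log_comp_eq_logDeriv ((hdiff ha).fun_div (hdiff hb) (hne hb))
    (div_ne_zero (hne ha) (hne hb))
  rw [Function.comp_def, logDeriv_div x (hne ha) (hne hb) (hdiff ha) (hdiff hb), hshift,
    hshift] at hlog
  rw [hlog, neg_sub]

lemma iteratedDeriv_neg_deriv_log_Gamma_div_Gamma (ha : 0 < x + a) (hb : 0 < x + b) (k : ℕ) :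
    iteratedDeriv k
        (fun y ↦ -deriv (fun z ↦ Real.log (Real.Gamma (z + a) / Real.Gamma (z + b))) y) x =
      iteratedDeriv k digamma (x + b) - iteratedDeriv k digamma (x + a) := by
  have hdigamma : (fun y ↦ -deriv (fun z ↦ Real.log (Real.Gamma (z + a) / Real.Gamma (z + b))) y)
      =ᶠ[𝓝 x] fun y ↦ digamma (y + b) - digamma (y + a) := by
    filter_upwards [lt_mem_nhds (neg_lt_iff_pos_add.2 ha), lt_mem_nhds (neg_lt_iff_pos_add.2 hb)]
      with y hya hyb
    exact neg_deriv_log_Gamma_div_Gamma (neg_lt_iff_pos_add.1 hya) (neg_lt_iff_pos_add.1 hyb)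
  have hsmooth {c : ℝ} (hc : 0 < x + c) : ContDiffAt ℝ k (fun y ↦ digamma (y + c)) x :=
    (analyticAt_digamma (ne_neg_natCast_of_pos hc)).contDiffAt.comp x
      (contDiffAt_id.add contDiffAt_const)
  rw [hdigamma.iteratedDeriv_eq, iteratedDeriv_fun_sub (hsmooth hb) (hsmooth ha),
    iteratedDeriv_comp_add_const, iteratedDeriv_comp_add_const]

end GammaRatio

theorem stmt_10_general {a b : ℝ} (hab : a < b) :
    (∀ x : ℝ, 0 < x + a → 0 < Real.Gamma (x + a) / Real.Gamma (x + b))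
      ∧ (∀ (k : ℕ) (x : ℝ), 0 < x + a →
          0 < (-1 : ℝ) ^ k *
            iteratedDeriv k
              (fun y ↦ -deriv (fun z ↦
                Real.log (Real.Gamma (z + a) / Real.Gamma (z + b))) y) x) := by
  have hlt (x : ℝ) : x + a < x + b := by gcongr
  refine ⟨fun x ha ↦ ?_, fun k x ha ↦ ?_⟩ <;> have hb : 0 < x + b := ha.trans (hlt x)
  · exact div_pos (Real.Gamma_pos_of_pos ha) (Real.Gamma_pos_of_pos hb)
  · rw [iteratedDeriv_neg_deriv_log_Gamma_div_Gamma ha hb, mul_sub]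
    exact sub_pos.2 (strictMonoOn_neg_one_pow_mul_iteratedDeriv_digamma k ha hb (hlt x))

/-- Lemma 4.2: for `q > 1` the function
`g(x) = Γ(x + 1/q) / Γ(x + 1)` is logarithmically completely monotone on `(0,∞)`:
`g > 0` there and `h := -(log g)'` satisfies `(-1)^k h^{(k)}(x) ≥ 0` for all `k ≥ 0`
and `x > 0`; in fact these inequalities are strict. -/
theorem stmt_10 (q : ℝ) (hq : 1 < q) :
    (∀ x : ℝ, 0 < x → 0 < Real.Gamma (x + 1 / q) / Real.Gamma (x + 1))
      ∧ (∀ (k : ℕ) (x : ℝ), 0 < x →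
          0 ≤ (-1 : ℝ) ^ k *
            iteratedDeriv k
              (fun y => -(deriv (fun z =>
                Real.log (Real.Gamma (z + 1 / q) / Real.Gamma (z + 1))) y)) x)
      ∧ (∀ (k : ℕ) (x : ℝ), 0 < x →
          0 < (-1 : ℝ) ^ k *
            iteratedDeriv k
              (fun y => -(deriv (fun z =>
                Real.log (Real.Gamma (z + 1 / q) / Real.Gamma (z + 1))) y)) x) := by
  have hpos (x : ℝ) (hx : 0 < x) : 0 < x + 1 / q := by positivity
  obtain ⟨hg, hh⟩ := stmt_10_general ((div_lt_one (one_pos.trans hq)).2 hq)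
  exact ⟨fun x hx ↦ hg x (hpos x hx), fun k x hx ↦ (hh k x (hpos x hx)).le,
    fun k x hx ↦ hh k x (hpos x hx)⟩
end
end

section
/- Let ℓ ∈ ℕ and p > 1 with Hölder conjugate q (1/p + 1/q = 1). Then for every integer n ≥ ℓ one has Γ(n−ℓ+1)/Γ(n+1/q) > 1/n^{ℓ−1/p}. -/
noncomputable section

/-!
The recurrence `Γ(x + 1) = x Γ(x)` makes `log x` the slope of the chord of `log Γ` over
`[x, x + 1]`. For `k ≥ 0` and `s < 1` the endpoints of `[x - k, x + s]` lie to the left of those of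
`[x, x + 1]`, so strict convexity of `log Γ` makes the chord over it less steep:
`log Γ(x + s) - log Γ(x - k) < (s + k) log x`. Take `k = ℓ - 1` and `s = 1 / q`.
-/

open Set

lemma secant_lt_secant_of_strictConvexOn {𝕜 : Type*} [Field 𝕜] [LinearOrder 𝕜]
    [IsStrictOrderedRing 𝕜] {S : Set 𝕜} {f : 𝕜 → 𝕜} (hf : StrictConvexOn 𝕜 S f) {a b c d : 𝕜}
    (ha : a ∈ S) (hd : d ∈ S) (hab : a < b) (hcd : c < d) (hac : a ≤ c) (hbd : b < d) :
    (f b - f a) / (b - a) < (f d - f c) / (d - c) := by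
  have Icc_subset : Icc a d ⊆ S := hf.1.ordConnected.out ha hd
  have hb : b ∈ S := Icc_subset ⟨hab.le, hbd.le⟩
  have hc : c ∈ S := Icc_subset ⟨hac, hcd.le⟩
  calc
    (f b - f a) / (b - a) < (f d - f a) / (d - a) :=
      hf.secant_strict_mono ha hb hd hab.ne' (hab.trans hbd).ne' hbd
    _ = (f a - f d) / (a - d) := by rw [← neg_div_neg_eq, neg_sub, neg_sub]
    _ ≤ (f c - f d) / (c - d) :=
      hf.convexOn.secant_mono hd ha hc (hab.trans hbd).ne hcd.ne hac
    _ = (f d - f c) / (d - c) := by rw [← neg_div_neg_eq, neg_sub, neg_sub]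

lemma log_Gamma_add_one {x : ℝ} (hx : 0 < x) :
    Real.log (Real.Gamma (x + 1)) = Real.log x + Real.log (Real.Gamma x) := by
  rw [Real.Gamma_add_one hx.ne', Real.log_mul hx.ne' (Real.Gamma_pos_of_pos hx).ne']

lemma strictConvexOn_log_Gamma : StrictConvexOn ℝ (Ioi 0) (Real.log ∘ Real.Gamma) := by
  -- `log Γ(x) = log Γ(x + 1) - log x`, where the first term is convex and `-log` strictly so.
  have convexOn_shift : ConvexOn ℝ (Ioi 0) fun x : ℝ ↦ Real.log (Real.Gamma (x + 1)) :=
    (Real.convexOn_log_Gamma.translate_left 1).subset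
      (fun x (hx : 0 < x) ↦ show 0 < 1 + x by positivity) (convex_Ioi 0)
  refine (convexOn_shift.sub_strictConcaveOn strictConcaveOn_log_Ioi).congr fun x hx ↦ ?_
  simp [log_Gamma_add_one hx]

lemma log_Gamma_add_sub_log_Gamma_sub_lt {x k s : ℝ} (hk : 0 ≤ k) (hkx : k < x) (hks : 0 < s + k)
    (hs : s < 1) :
    Real.log (Real.Gamma (x + s)) - Real.log (Real.Gamma (x - k)) < (s + k) * Real.log x := by
  have hx : 0 < x := hk.trans_lt hkx
  have chord_lt := secant_lt_secant_of_strictConvexOn strictConvexOn_log_Gamma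
    (a := x - k) (b := x + s) (c := x) (d := x + 1) (sub_pos.2 hkx)
    (show 0 < x + 1 by positivity) (by linarith) (by linarith) (by linarith) (by linarith)
  simp only [Function.comp_apply, log_Gamma_add_one hx, add_sub_cancel_right,
    add_sub_cancel_left, div_one, add_sub_sub_cancel] at chord_lt
  rwa [div_lt_iff₀ hks, mul_comm] at chord_lt

lemma Gamma_add_lt_rpow_mul_Gamma_sub {x k s : ℝ} (hk : 0 ≤ k) (hkx : k < x) (hks : 0 < s + k)
    (hs : s < 1) :
    Real.Gamma (x + s) < x ^ (s + k) * Real.Gamma (x - k) := by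
  have hx : 0 < x := hk.trans_lt hkx
  have Gamma_add_pos : 0 < Real.Gamma (x + s) := Real.Gamma_pos_of_pos (by linarith)
  have Gamma_sub_pos : 0 < Real.Gamma (x - k) := Real.Gamma_pos_of_pos (sub_pos.2 hkx)
  rw [← Real.log_lt_log_iff Gamma_add_pos (by positivity),
    Real.log_mul (by positivity) Gamma_sub_pos.ne', Real.log_rpow hx, ← sub_lt_iff_lt_add]
  exact log_Gamma_add_sub_log_Gamma_sub_lt hk hkx hks hs

-- The case `p = 1`, `q = ∞` is covered by the junk value `1 / 0 = 0`.
theorem stmt_14_general {ℓ p q x : ℝ} (hℓ : 1 ≤ ℓ) (hp : 1 / ℓ < p) (hpq : 1 / p + 1 / q = 1)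
    (hx : ℓ - 1 < x) :
    1 / x ^ (ℓ - 1 / p) < Real.Gamma (x - ℓ + 1) / Real.Gamma (x + 1 / q) := by
  have hℓ₀ : 0 < ℓ := by positivity
  have hp₀ : 0 < 1 / p := one_div_pos.2 ((one_div_pos.2 hℓ₀).trans hp)
  have hpℓ : 1 / p < ℓ := (one_div_lt hℓ₀ (one_div_pos.1 hp₀)).1 hp
  have hx₀ : 0 < x := by linarith
  have exponent_eq : 1 / q + (ℓ - 1) = ℓ - 1 / p := by linarith
  have key := Gamma_add_lt_rpow_mul_Gamma_sub (s := 1 / q) (sub_nonneg.2 hℓ) hx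
    (by linarith) (by linarith)
  rw [exponent_eq, ← sub_add] at key
  rwa [div_lt_div_iff₀ (by positivity) (Real.Gamma_pos_of_pos (by linarith)), one_mul, mul_comm]

/-- Lemma 4.4: for all integers `n ≥ ℓ`,
`Γ(n - ℓ + 1) / Γ(n + 1/q) > 1 / n^{ℓ - 1/p}`. -/
theorem stmt_14 (ℓ : ℕ) (hℓ : 0 < ℓ) (p q : ℝ) (hp : 1 < p) (hpq : 1 / p + 1 / q = 1)
    (n : ℤ) (hn : (ℓ : ℤ) ≤ n) :
    1 / (n : ℝ) ^ ((ℓ : ℝ) - 1 / p)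
      < Real.Gamma ((n : ℝ) - ℓ + 1) / Real.Gamma ((n : ℝ) + 1 / q) := by
  have one_le_ℓ : (1 : ℝ) ≤ ℓ := by exact_mod_cast hℓ
  have ℓ_le_n : (ℓ : ℝ) ≤ n := by exact_mod_cast hn
  exact stmt_14_general one_le_ℓ ((div_le_one₀ (by positivity)).2 one_le_ℓ |>.trans_lt hp) hpq
    (by linarith)
end
end

section
/- Let p > 1 with Hölder conjugate q (1/p + 1/q = 1). The function f(x) := (Γ(x+1/q)/Γ(x+1))^{p−1} − (x+1)^{−1/q} is completely monotone on (0,∞); that is, (−1)^k f^{(k)}(x) ≥ 0 for every integer k ≥ 0 and every x > 0. -/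
noncomputable section

/-!
Let `φ_r(x) = log Γ(x) - log Γ(x + r) + r log(x + r)` with `r ≥ 0`. Stirling's formula gives
`φ_r(x + n) → 0`, so `φ_r(x) = ∑ₙ ψ_r(x + n)`, where `ψ_r(x) = φ_r(x) - φ_r(x + 1)` is an elementary
function with `-ψ_r'(x) = r (r + 1) / (x (x + r) (x + r + 1))`. Hence `ψ_r`, then `φ_r`, then
`exp (c φ_r) - 1` for `c ≥ 0`, are completely monotone on `(0, ∞)`, and so is
`(Γ(x) / Γ(x + r)) ^ c - (x + r) ^ (-c r) = (x + r) ^ (-c r) (exp (c φ_r(x)) - 1)`.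
The theorem is the case `r = 1 / p`, `c = p - 1`, translated by `1 / q`.
-/

open Set Filter Topology
open scoped ContDiff

/-- `f` is completely monotone on `s`: it is smooth there and its derivatives alternate in sign,
starting with `0 ≤ f`. Derivatives are taken within `s`, so the notion only sees the values of `f`
on `s`; it is meant for sets of unique differentiability. -/
def CompletelyMonotoneOn (f : ℝ → ℝ) (s : Set ℝ) : Prop :=
  ContDiffOn ℝ ∞ f s ∧ ∀ (n : ℕ), ∀ x ∈ s, 0 ≤ (-1) ^ n * iteratedDerivWithin n f s x

namespace CompletelyMonotoneOn

variable {f g : ℝ → ℝ} {s t : Set ℝ}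

theorem nonneg (hf : CompletelyMonotoneOn f s) {x : ℝ} (hx : x ∈ s) : 0 ≤ f x := by
  simpa using hf.2 0 x hx

theorem congr (hf : CompletelyMonotoneOn f s) (hfg : EqOn g f s) : CompletelyMonotoneOn g s :=
  ⟨hf.1.congr hfg, fun n x hx => iteratedDerivWithin_congr hfg hx ▸ hf.2 n x hx⟩

theorem exists_hasDerivAt (hs : IsOpen s) (hf : CompletelyMonotoneOn f s) :
    ∃ g, CompletelyMonotoneOn g s ∧ ∀ x ∈ s, HasDerivAt f (-g x) x := by
  obtain ⟨hdiff, hderiv⟩ := (contDiffOn_infty_iff_derivWithin hs.uniqueDiffOn).1 hf.1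
  refine ⟨-derivWithin f s, ⟨hderiv.neg, fun n x hx => ?_⟩, fun x hx => ?_⟩
  · have hsucc := hf.2 (n + 1) x hx
    rw [iteratedDerivWithin_succ'] at hsucc
    rw [iteratedDerivWithin_neg]
    simpa [pow_succ] using hsucc
  · simpa [derivWithin_of_isOpen hs hx] using (hdiff.differentiableAt (hs.mem_nhds hx)).hasDerivAt

theorem coinduct (hs : IsOpen s) {𝒞 : Set (ℝ → ℝ)} (nonneg : ∀ f ∈ 𝒞, ∀ x ∈ s, 0 ≤ f x)
    (exists_hasDerivAt : ∀ f ∈ 𝒞, ∃ g ∈ 𝒞, ∀ x ∈ s, HasDerivAt f (-g x) x) (hf : f ∈ 𝒞) :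
    CompletelyMonotoneOn f s := by
  suffices h : ∀ (n : ℕ), ∀ f ∈ 𝒞,
      ContDiffOn ℝ n f s ∧ ∀ x ∈ s, 0 ≤ (-1) ^ n * iteratedDerivWithin n f s x from
    ⟨contDiffOn_infty.2 fun n => (h n f hf).1, fun n => (h n f hf).2⟩
  intro n
  induction n with
  | zero =>
    intro f hf
    obtain ⟨g, -, hfg⟩ := exists_hasDerivAt f hf
    exact ⟨contDiffOn_zero.2 fun x hx => (hfg x hx).continuousAt.continuousWithinAt,
      by simpa using nonneg f hf⟩
  | succ n ih =>
    intro f hf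
    obtain ⟨g, hg, hfg⟩ := exists_hasDerivAt f hf
    obtain ⟨hgn, hg_sign⟩ := ih g hg
    have hderiv : EqOn (derivWithin f s) (-g) s := fun x hx => by
      rw [derivWithin_of_isOpen hs hx, (hfg x hx).deriv, Pi.neg_apply]
    refine ⟨?_, fun x hx => ?_⟩
    · exact (contDiffOn_succ_iff_derivWithin hs.uniqueDiffOn).2
        ⟨fun x hx => (hfg x hx).differentiableAt.differentiableWithinAt, by simp,
          hgn.neg.congr hderiv⟩
    · rw [iteratedDerivWithin_succ', iteratedDerivWithin_congr hderiv hx, iteratedDerivWithin_neg]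
      simpa [pow_succ] using hg_sign x hx

theorem of_hasDerivAt (hs : IsOpen s) (hf : ∀ x ∈ s, 0 ≤ f x) (hg : CompletelyMonotoneOn g s)
    (hfg : ∀ x ∈ s, HasDerivAt f (-g x) x) : CompletelyMonotoneOn f s := by
  refine coinduct hs (𝒞 := insert f {h | CompletelyMonotoneOn h s}) ?_ ?_ (mem_insert f _)
  · rintro h (rfl | hh)
    exacts [hf, fun x => hh.nonneg]
  · rintro h (rfl | hh)
    · exact ⟨g, .inr hg, hfg⟩
    · obtain ⟨h', hh', hhh'⟩ := hh.exists_hasDerivAt hs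
      exact ⟨h', .inr hh', hhh'⟩

theorem comp_add_const (hs : IsOpen s) (ht : IsOpen t) (hf : CompletelyMonotoneOn f s) {a : ℝ}
    (hts : ∀ x ∈ t, x + a ∈ s) : CompletelyMonotoneOn (fun x => f (x + a)) t := by
  refine coinduct ht (𝒞 := {h | ∃ f, CompletelyMonotoneOn f s ∧ h = fun x => f (x + a)})
    ?_ ?_ ⟨f, hf, rfl⟩
  · rintro _ ⟨f, hf, rfl⟩ x hx
    exact hf.nonneg (hts x hx)
  · rintro _ ⟨f, hf, rfl⟩
    obtain ⟨g, hg, hfg⟩ := hf.exists_hasDerivAt hs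
    exact ⟨_, ⟨g, hg, rfl⟩, fun x hx => (hfg _ (hts x hx)).comp_add_const x a⟩

protected theorem const (hs : IsOpen s) {c : ℝ} (hc : 0 ≤ c) :
    CompletelyMonotoneOn (fun _ => c) s := by
  refine coinduct hs (𝒞 := {h | ∃ c : ℝ, 0 ≤ c ∧ h = fun _ => c}) ?_ ?_ ⟨c, hc, rfl⟩
  · rintro _ ⟨c, hc, rfl⟩ x -
    exact hc
  · rintro _ ⟨c, -, rfl⟩
    exact ⟨_, ⟨0, le_rfl, rfl⟩, fun x _ => by simpa using hasDerivAt_const x c⟩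

protected theorem add (hs : IsOpen s) (hf : CompletelyMonotoneOn f s)
    (hg : CompletelyMonotoneOn g s) : CompletelyMonotoneOn (fun x => f x + g x) s := by
  refine ⟨hf.1.add hg.1, fun n x hx => ?_⟩
  rw [iteratedDerivWithin_fun_add hx hs.uniqueDiffOn (contDiffOn_infty.1 hf.1 n x hx)
    (contDiffOn_infty.1 hg.1 n x hx), mul_add]
  exact add_nonneg (hf.2 n x hx) (hg.2 n x hx)

protected theorem mul (hs : IsOpen s) (hf : CompletelyMonotoneOn f s)
    (hg : CompletelyMonotoneOn g s) : CompletelyMonotoneOn (fun x => f x * g x) s := by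
  refine ⟨hf.1.mul hg.1, fun n x hx => ?_⟩
  change 0 ≤ _ * iteratedDerivWithin n (f * g) s x
  rw [iteratedDerivWithin_mul hx hs.uniqueDiffOn (contDiffOn_infty.1 hf.1 n x hx)
    (contDiffOn_infty.1 hg.1 n x hx), Finset.mul_sum]
  refine Finset.sum_nonneg fun i hi => ?_
  have hsign : (-1 : ℝ) ^ n = (-1) ^ i * (-1) ^ (n - i) := by
    rw [← pow_add, Nat.add_sub_cancel' (Finset.mem_range_succ_iff.1 hi)]
  calc 0 ≤ n.choose i * ((-1) ^ i * iteratedDerivWithin i f s x)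
        * ((-1) ^ (n - i) * iteratedDerivWithin (n - i) g s x) :=
      mul_nonneg (mul_nonneg (Nat.cast_nonneg _) (hf.2 i x hx)) (hg.2 (n - i) x hx)
    _ = _ := by rw [hsign]; ring

theorem const_mul (hs : IsOpen s) {c : ℝ} (hc : 0 ≤ c) (hf : CompletelyMonotoneOn f s) :
    CompletelyMonotoneOn (fun x => c * f x) s :=
  (CompletelyMonotoneOn.const hs hc).mul hs hf

protected theorem exp (hs : IsOpen s) (hf : CompletelyMonotoneOn f s) :
    CompletelyMonotoneOn (fun x => Real.exp (f x)) s := by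
  obtain ⟨f', hf', hff'⟩ := hf.exists_hasDerivAt hs
  refine coinduct hs
    (𝒞 := {h | ∃ g, CompletelyMonotoneOn g s ∧ h = fun x => g x * Real.exp (f x)})
    ?_ ?_ ⟨fun _ => 1, .const hs zero_le_one, by simp⟩
  · rintro _ ⟨g, hg, rfl⟩ x hx
    exact mul_nonneg (hg.nonneg hx) (Real.exp_nonneg _)
  · rintro _ ⟨g, hg, rfl⟩
    obtain ⟨g', hg', hgg'⟩ := hg.exists_hasDerivAt hs
    refine ⟨_, ⟨_, hg'.add hs (hg.mul hs hf'), rfl⟩, fun x hx => ?_⟩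
    exact ((hgg' x hx).fun_mul (hff' x hx).exp).congr_deriv (by ring)

theorem exp_sub_one (hs : IsOpen s) (hf : CompletelyMonotoneOn f s) :
    CompletelyMonotoneOn (fun x => Real.exp (f x) - 1) s := by
  obtain ⟨g, hg, hfg⟩ := (hf.exp hs).exists_hasDerivAt hs
  refine of_hasDerivAt hs (fun x hx => ?_) hg fun x hx => (hfg x hx).sub_const 1
  simpa using hf.nonneg hx

theorem antitoneOn (hs : IsOpen s) (hf : CompletelyMonotoneOn f s) (ht : Convex ℝ t)
    (hts : t ⊆ s) : AntitoneOn f t := by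
  obtain ⟨g, hg, hfg⟩ := hf.exists_hasDerivAt hs
  refine antitoneOn_of_deriv_nonpos ht (hf.1.continuousOn.mono hts)
    (fun x hx => (hfg x (hts (interior_subset hx))).differentiableAt.differentiableWithinAt)
    fun x hx => ?_
  have hx : x ∈ s := hts (interior_subset hx)
  rw [(hfg x hx).deriv, neg_nonpos]
  exact hg.nonneg hx

/-- A mean value bound on `-f'` by an earlier value of `f`; it is why a pointwise convergent series
of completely monotone functions may always be differentiated termwise. -/
theorem mul_sub_le_of_hasDerivAt (hs : IsOpen s) (hf : ∀ x ∈ s, 0 ≤ f x)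
    (hg : CompletelyMonotoneOn g s) (hfg : ∀ x ∈ s, HasDerivAt f (-g x) x) {u v : ℝ}
    (huv : u ≤ v) (hsub : Icc u v ⊆ s) :
    g v * (v - u) ≤ f u := by
  have hmvt : f v - f u ≤ -g v * (v - u) := by
    refine (convex_Icc u v).image_sub_le_mul_sub_of_deriv_le
      (fun x hx => (hfg x (hsub hx)).continuousAt.continuousWithinAt)
      (fun x hx => (hfg x (hsub (interior_subset hx))).differentiableAt.differentiableWithinAt)
      (fun x hx => ?_) u (left_mem_Icc.2 huv) v (right_mem_Icc.2 huv) huv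
    have hx : x ∈ Icc u v := interior_subset hx
    rw [(hfg x (hsub hx)).deriv, neg_le_neg_iff]
    exact hg.antitoneOn hs (convex_Icc u v) hsub hx (right_mem_Icc.2 huv) hx.2
  linarith [hf v (hsub (right_mem_Icc.2 huv))]

section Series

variable {ι : Type*} {F G : ι → ℝ → ℝ}

theorem summable_of_hasDerivAt (hs : IsOpen s) (hF : ∀ i, ∀ x ∈ s, 0 ≤ F i x)
    (hG : ∀ i, CompletelyMonotoneOn (G i) s) (hFG : ∀ i, ∀ x ∈ s, HasDerivAt (F i) (-G i x) x)
    (hsum : ∀ x ∈ s, Summable (F · x)) {x : ℝ} (hx : x ∈ s) : Summable (G · x) := by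
  obtain ⟨ε, hε, hsub⟩ := (nhds_basis_Icc_pos x).mem_iff.1 (hs.mem_nhds hx)
  have hsub' : Icc (x - ε) x ⊆ s := (Icc_subset_Icc_right (by linarith)).trans hsub
  refine .of_nonneg_of_le (fun i => (hG i).nonneg hx) (fun i => ?_)
    ((hsum (x - ε) (hsub' ⟨le_rfl, by linarith⟩)).div_const ε)
  rw [le_div_iff₀ hε]
  simpa using mul_sub_le_of_hasDerivAt hs (hF i) (hG i) (hFG i) (by linarith) hsub'

theorem hasDerivAt_tsum (hs : IsOpen s) (hG : ∀ i, CompletelyMonotoneOn (G i) s)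
    (hFG : ∀ i, ∀ x ∈ s, HasDerivAt (F i) (-G i x) x) (hF_sum : ∀ x ∈ s, Summable (F · x))
    (hG_sum : ∀ x ∈ s, Summable (G · x)) {x : ℝ} (hx : x ∈ s) :
    HasDerivAt (fun y => ∑' i, F i y) (-∑' i, G i x) x := by
  obtain ⟨ε, hε, hsub⟩ := (nhds_basis_Icc_pos x).mem_iff.1 (hs.mem_nhds hx)
  have hleft : x - ε ∈ Icc (x - ε) (x + ε) := left_mem_Icc.2 (by linarith)
  have hmid : x ∈ Ioo (x - ε) (x + ε) := ⟨by linarith, by linarith⟩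
  rw [← tsum_neg]
  refine hasDerivAt_tsum_of_isPreconnected (hG_sum (x - ε) (hsub hleft)) isOpen_Ioo
    isPreconnected_Ioo (fun i y hy => hFG i y (hsub (Ioo_subset_Icc_self hy))) (fun i y hy => ?_)
    hmid (hF_sum x hx) hmid
  have hy : y ∈ Icc (x - ε) (x + ε) := Ioo_subset_Icc_self hy
  rw [norm_neg, Real.norm_of_nonneg ((hG i).nonneg (hsub hy))]
  exact (hG i).antitoneOn hs (convex_Icc _ _) hsub hleft hy hy.1

protected theorem tsum (hs : IsOpen s) (hF : ∀ i, CompletelyMonotoneOn (F i) s)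
    (hsum : ∀ x ∈ s, Summable (F · x)) : CompletelyMonotoneOn (fun x => ∑' i, F i x) s := by
  refine coinduct hs
    (𝒞 := {h | ∃ F : ι → ℝ → ℝ, (∀ i, CompletelyMonotoneOn (F i) s) ∧
      (∀ x ∈ s, Summable (F · x)) ∧ h = fun x => ∑' i, F i x})
    ?_ ?_ ⟨F, hF, hsum, rfl⟩
  · rintro _ ⟨F, hF, -, rfl⟩ x hx
    exact tsum_nonneg fun i => (hF i).nonneg hx
  · rintro _ ⟨F, hF, hF_sum, rfl⟩
    choose G hG hFG using fun i => (hF i).exists_hasDerivAt hs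
    have hG_sum : ∀ x ∈ s, Summable (G · x) := fun x =>
      summable_of_hasDerivAt hs (fun i x => (hF i).nonneg) hG hFG hF_sum
    exact ⟨_, ⟨G, hG, hG_sum, rfl⟩, fun x => hasDerivAt_tsum hs hG hFG hF_sum hG_sum⟩

end Series

end CompletelyMonotoneOn

open CompletelyMonotoneOn (coinduct of_hasDerivAt)

theorem completelyMonotoneOn_rpow_neg {a : ℝ} (ha : 0 ≤ a) :
    CompletelyMonotoneOn (fun x => x ^ (-a)) (Ioi 0) := by
  refine coinduct isOpen_Ioi
    (𝒞 := {h | ∃ c a : ℝ, 0 ≤ c ∧ 0 ≤ a ∧ h = fun x => c * x ^ (-a)})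
    ?_ ?_ ⟨1, a, zero_le_one, ha, by simp⟩
  · rintro _ ⟨c, a, hc, -, rfl⟩ x hx
    exact mul_nonneg hc (Real.rpow_nonneg (le_of_lt hx) _)
  · rintro _ ⟨c, a, hc, ha, rfl⟩
    refine ⟨_, ⟨c * a, a + 1, by positivity, by positivity, rfl⟩, fun x hx => ?_⟩
    have hx : x ≠ 0 := ne_of_gt hx
    refine ((Real.hasDerivAt_rpow_const (.inl hx)).const_mul c).congr_deriv ?_
    rw [neg_add']
    ring

theorem completelyMonotoneOn_add_const_rpow_neg {a b : ℝ} (ha : 0 ≤ a) (hb : 0 ≤ b) :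
    CompletelyMonotoneOn (fun x => (x + b) ^ (-a)) (Ioi 0) :=
  (completelyMonotoneOn_rpow_neg ha).comp_add_const isOpen_Ioi isOpen_Ioi
    fun _ hx => add_pos_of_pos_of_nonneg hx hb

theorem completelyMonotoneOn_add_const_inv {b : ℝ} (hb : 0 ≤ b) :
    CompletelyMonotoneOn (fun x => (x + b)⁻¹) (Ioi 0) := by
  simpa only [Real.rpow_neg_one] using completelyMonotoneOn_add_const_rpow_neg zero_le_one hb

/-- The logarithm of the ratio `Γ(x) (x + r) ^ r / Γ(x + r)` studied by Wendel, which tends to `1`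
as `x → ∞`. -/
def logWendelRatio (r x : ℝ) : ℝ :=
  Real.log (Real.Gamma x) - Real.log (Real.Gamma (x + r)) + r * Real.log (x + r)

/-- The difference `logWendelRatio r x - logWendelRatio r (x + 1)`, simplified by the functional
equation of `Γ`. -/
def logWendelRatioStep (r x : ℝ) : ℝ :=
  Real.log (x + r) - Real.log x - r * (Real.log (x + r + 1) - Real.log (x + r))

variable {r x : ℝ}

theorem logWendelRatioStep_nonneg (hr : 0 ≤ r) (hx : 0 < x) : 0 ≤ logWendelRatioStep r x := by
  have hlow : r / (x + r) ≤ Real.log (x + r) - Real.log x := by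
    rw [← Real.log_div (by positivity) hx.ne']
    refine le_trans (le_of_eq ?_) (Real.one_sub_inv_le_log_of_pos (by positivity))
    field_simp
    ring
  have hupp : Real.log (x + r + 1) - Real.log (x + r) ≤ 1 / (x + r) := by
    rw [← Real.log_div (by positivity) (by positivity)]
    refine (Real.log_le_sub_one_of_pos (by positivity)).trans (le_of_eq ?_)
    field_simp
    ring
  rw [logWendelRatioStep, sub_nonneg]
  calc r * (Real.log (x + r + 1) - Real.log (x + r)) ≤ r * (1 / (x + r)) := by gcongr
    _ = r / (x + r) := mul_one_div r _
    _ ≤ Real.log (x + r) - Real.log x := hlow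

theorem hasDerivAt_logWendelRatioStep (hr : 0 ≤ r) (hx : 0 < x) :
    HasDerivAt (logWendelRatioStep r)
      (-(r * (r + 1) * (x⁻¹ * ((x + r)⁻¹ * (x + (r + 1))⁻¹)))) x := by
  have hlog : ∀ b : ℝ, 0 ≤ b → HasDerivAt (fun y => Real.log (y + b)) (1 / (x + b)) x :=
    fun b hb => ((hasDerivAt_id' x).add_const b).log (by positivity)
  have hlog_r := hlog r hr
  have hlog_r_one : HasDerivAt (fun y => Real.log (y + r + 1)) (1 / (x + (r + 1))) x := by
    simpa only [add_assoc] using hlog (r + 1) (by positivity)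
  refine ((hlog_r.sub (Real.hasDerivAt_log hx.ne')).sub
    ((hlog_r_one.sub hlog_r).const_mul r)).congr_deriv ?_
  field_simp
  ring

theorem completelyMonotoneOn_logWendelRatioStep (hr : 0 ≤ r) :
    CompletelyMonotoneOn (logWendelRatioStep r) (Ioi 0) := by
  have hr_one : 0 ≤ r + 1 := by positivity
  have hinv : CompletelyMonotoneOn (fun x => x⁻¹) (Ioi 0) := by
    simpa only [add_zero] using completelyMonotoneOn_add_const_inv le_rfl
  have hinvs := hinv.mul isOpen_Ioi ((completelyMonotoneOn_add_const_inv hr).mul isOpen_Ioi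
    (completelyMonotoneOn_add_const_inv hr_one))
  exact of_hasDerivAt isOpen_Ioi (fun x => logWendelRatioStep_nonneg hr)
    (hinvs.const_mul isOpen_Ioi (mul_nonneg hr hr_one))
    fun x => hasDerivAt_logWendelRatioStep hr

theorem sum_range_logWendelRatioStep (r x : ℝ) (n : ℕ) :
    ∑ i ∈ Finset.range (n + 1), logWendelRatioStep r (x + i) =
      Real.BohrMollerup.logGammaSeq x n - Real.BohrMollerup.logGammaSeq (x + r) n
        + r * Real.log (x + r) - r * (Real.log (n + (x + r + 1)) - Real.log n) := by
  have htel : ∑ i ∈ Finset.range (n + 1),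
      (Real.log (x + i + r + 1) - Real.log (x + i + r)) =
        Real.log (n + (x + r + 1)) - Real.log (x + r) := by
    have hsucc : ∀ i : ℕ, x + i + r + 1 = x + (i + 1 : ℕ) + r := fun i => by push_cast; ring
    have hlast : (n : ℝ) + (x + r + 1) = x + (n + 1 : ℕ) + r := by push_cast; ring
    simp only [hsucc, hlast]
    simpa using Finset.sum_range_sub (fun i : ℕ => Real.log (x + i + r)) (n + 1)
  simp only [logWendelRatioStep, Finset.sum_sub_distrib, ← Finset.mul_sum] at htel ⊢
  simp only [htel, Real.BohrMollerup.logGammaSeq, add_right_comm x r]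
  ring

theorem hasSum_logWendelRatioStep (hr : 0 ≤ r) (hx : 0 < x) :
    HasSum (fun i : ℕ => logWendelRatioStep r (x + i)) (logWendelRatio r x) := by
  rw [hasSum_iff_tendsto_nat_of_nonneg fun i => logWendelRatioStep_nonneg hr (by positivity),
    ← tendsto_add_atTop_iff_nat 1]
  simp only [sum_range_logWendelRatioStep]
  have hlog : Tendsto (fun n : ℕ => Real.log (n + (x + r + 1)) - Real.log n) atTop (𝓝 0) :=
    (Real.tendsto_log_comp_add_sub_log _).comp tendsto_natCast_atTop_atTop
  simpa [logWendelRatio] using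
    (((Real.BohrMollerup.tendsto_log_gamma hx).sub
      (Real.BohrMollerup.tendsto_log_gamma (by positivity : 0 < x + r))).add_const
        (r * Real.log (x + r))).sub (hlog.const_mul r)

theorem completelyMonotoneOn_logWendelRatio (hr : 0 ≤ r) :
    CompletelyMonotoneOn (logWendelRatio r) (Ioi 0) := by
  have hshift : ∀ i : ℕ, CompletelyMonotoneOn (fun x => logWendelRatioStep r (x + i)) (Ioi 0) :=
    fun i => (completelyMonotoneOn_logWendelRatioStep hr).comp_add_const isOpen_Ioi isOpen_Ioi
      fun _ hx => mem_Ioi.2 (add_pos_of_pos_of_nonneg hx i.cast_nonneg)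
  exact (CompletelyMonotoneOn.tsum isOpen_Ioi hshift
    fun x hx => (hasSum_logWendelRatioStep hr hx).summable).congr
      fun x hx => (hasSum_logWendelRatioStep hr hx).tsum_eq.symm

theorem Gamma_div_Gamma_rpow_eq (hr : 0 ≤ r) (c : ℝ) (hx : 0 < x) :
    (Real.Gamma x / Real.Gamma (x + r)) ^ c =
      (x + r) ^ (-(c * r)) * Real.exp (c * logWendelRatio r x) := by
  have hΓ : 0 < Real.Gamma x := Real.Gamma_pos_of_pos hx
  have hΓr : 0 < Real.Gamma (x + r) := Real.Gamma_pos_of_pos (by positivity)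
  rw [Real.rpow_def_of_pos (div_pos hΓ hΓr), Real.log_div hΓ.ne' hΓr.ne',
    Real.rpow_def_of_pos (by positivity : 0 < x + r), ← Real.exp_add, logWendelRatio]
  ring_nf

theorem completelyMonotoneOn_Gamma_div_Gamma_rpow_sub {c : ℝ} (hr : 0 ≤ r) (hc : 0 ≤ c) :
    CompletelyMonotoneOn
      (fun x => (Real.Gamma x / Real.Gamma (x + r)) ^ c - (x + r) ^ (-(c * r))) (Ioi 0) := by
  have hexp := ((completelyMonotoneOn_logWendelRatio hr).const_mul isOpen_Ioi hc).exp_sub_one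
    isOpen_Ioi
  refine ((completelyMonotoneOn_add_const_rpow_neg (mul_nonneg hc hr) hr).mul isOpen_Ioi
    hexp).congr fun x hx => ?_
  simp only [Gamma_div_Gamma_rpow_eq hr c hx]
  ring

theorem stmt_16_general {a b c : ℝ} (hab : a ≤ b) (hc : 0 ≤ c) :
    CompletelyMonotoneOn
      (fun x => (Real.Gamma (x + a) / Real.Gamma (x + b)) ^ c - (x + b) ^ (-(c * (b - a))))
      (Ioi (-a)) := by
  have hcm := completelyMonotoneOn_Gamma_div_Gamma_rpow_sub (sub_nonneg.2 hab) hc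
  have hmaps : ∀ x ∈ Ioi (-a), x + a ∈ Ioi 0 := fun x hx => mem_Ioi.2 (neg_lt_iff_pos_add.1 hx)
  simpa only [add_assoc, add_sub_cancel] using hcm.comp_add_const isOpen_Ioi isOpen_Ioi hmaps

/-- Step 1 in the proof of Lemma 4.5: the function
`f(x) = (Γ(x+1/q)/Γ(x+1))^{p-1} - (x+1)^{-1/q}` is completely monotone on `(0,∞)`. -/
theorem stmt_16 (p q : ℝ) (hp : 1 < p) (hpq : 1 / p + 1 / q = 1) :
    ∀ (k : ℕ) (x : ℝ), 0 < x →
      0 ≤ (-1 : ℝ) ^ k *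
        iteratedDeriv k
          (fun y => (Real.Gamma (y + 1 / q) / Real.Gamma (y + 1)) ^ (p - 1)
              - (y + 1) ^ (-(1 / q))) x := by
  intro k x hx
  have hconj : p.HolderConjugate q := Real.holderConjugate_iff.2 ⟨hp, by simpa using hpq⟩
  have hexponent : (p - 1) * (1 - 1 / q) = 1 / q := by
    linear_combination mul_one_div_cancel hconj.ne_zero - p * hpq
  have hx' : x ∈ Ioi (-(1 / q)) := (neg_neg_of_pos hconj.symm.one_div_pos).trans hx
  have hsign := (stmt_16_general (a := 1 / q) (b := 1) (c := p - 1)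
    (by linarith [hconj.one_div_pos]) hconj.sub_one_pos.le).2 k x hx'
  rwa [hexponent, iteratedDerivWithin_of_isOpen isOpen_Ioi hx'] at hsign
end
end
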